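/- arXiv:2602.07965 — 5 statements merged into one kernel-verified Lean document; each statement's English description precedes it below -/
import Mathlib

section
/- Let M(t) = −t − v₁t² − v₁²t³ − (2v₁³ + v₂)t⁴ − (4v₁⁴ + 3v₁v₂)t⁵ ∈ R[[t]]. Then L(M(t)) ≡ −L(t) (mod t⁶); that is, M is the formal inverse [−1]_F(t) of the universal 2-typical formal group law modulo t⁶. -/
open Polynomial

/-- The coefficient ring `R = ℚ[v₁, v₂]`. -/
noncomputable abbrev Rv : Type := MvPolynomial (Fin 2) ℚ

noncomputable def v₁ : Rv := MvPolynomial.X 0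
noncomputable def v₂ : Rv := MvPolynomial.X 1

/-- The logarithm of the universal 2-typical formal group law (with Hazewinkel
generators `v₁`, `v₂`), truncated in degrees ≤ 5:
`L(t) = t + (v₁/2)·t² + (v₁³/4 + v₂/2)·t⁴`. -/
noncomputable def Ltrunc : Polynomial Rv :=
  X + C (MvPolynomial.C (1/2 : ℚ) * v₁) * X ^ 2
    + C (MvPolynomial.C (1/4 : ℚ) * v₁ ^ 3 + MvPolynomial.C (1/2 : ℚ) * v₂) * X ^ 4

/-- `M(t) = −t − v₁t² − v₁²t³ − (2v₁³ + v₂)t⁴ − (4v₁⁴ + 3v₁v₂)t⁵`. -/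
noncomputable def Mexp : Polynomial Rv :=
  -X - C v₁ * X ^ 2 - C (v₁ ^ 2) * X ^ 3
    - C (2 * v₁ ^ 3 + v₂) * X ^ 4
    - C (4 * v₁ ^ 4 + 3 * (v₁ * v₂)) * X ^ 5

/-!
Evaluate both sides at a point `t` with `t ^ 6 = 0`. There the powers of `M(t)` collapse:
`M(t)² = t² + 2v₁t³ + 3v₁²t⁴ + (6v₁³ + 2v₂)t⁵` and `M(t)⁴ = t⁴ + 4v₁t⁵`. Substituting them in
`L(M(t)) + L(t)`, what remains vanishes coefficient by coefficient by Hazewinkel's recursion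
`2l₁ = v₁`, `2l₂ = l₁v₁² + v₂`. Taking for `t` the class of `X` in `S[X] / (X ^ 6)` turns this
into the comparison of coefficients.
-/

/-- The logarithm `t + l₁t² + l₂t⁴` of a 2-typical formal group law in degrees ≤ 5, over an
arbitrary ring and in terms of its coefficients `l₁`, `l₂` instead of Hazewinkel's generators. -/
noncomputable def twoTypicalLog {S : Type*} [CommRing S] (l₁ l₂ : S) : S[X] :=
  X + C l₁ * X ^ 2 + C l₂ * X ^ 4

/-- The series `[-1](t)` in degrees ≤ 5 of the 2-typical formal group law over an arbitrary ring
whose Hazewinkel generators are `a` (for `v₁`) and `b` (for `v₂`). -/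
noncomputable def twoTypicalNeg {S : Type*} [CommRing S] (a b : S) : S[X] :=
  -X - C a * X ^ 2 - C (a ^ 2) * X ^ 3
    - C (2 * a ^ 3 + b) * X ^ 4
    - C (4 * a ^ 4 + 3 * (a * b)) * X ^ 5

theorem adjoinRoot_mk_X_pow_eq_mk_iff {S : Type*} [CommRing S] {n : ℕ} {p q : S[X]} :
    AdjoinRoot.mk (X ^ n) p = AdjoinRoot.mk (X ^ n) q ↔ ∀ k < n, p.coeff k = q.coeff k := by
  simp only [AdjoinRoot.mk_eq_mk, X_pow_dvd_iff, coeff_sub, sub_eq_zero]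

section Nilpotent

variable {S A : Type*} [CommRing S] [CommRing A] [Algebra S A] {t : A}

theorem aeval_twoTypicalLog (l₁ l₂ : S) (t : A) :
    aeval t (twoTypicalLog l₁ l₂) = t + algebraMap S A l₁ * t ^ 2 + algebraMap S A l₂ * t ^ 4 := by
  simp [twoTypicalLog]

theorem aeval_twoTypicalNeg (a b : S) (t : A) :
    aeval t (twoTypicalNeg a b) =
      -t - algebraMap S A a * t ^ 2 - algebraMap S A (a ^ 2) * t ^ 3
        - algebraMap S A (2 * a ^ 3 + b) * t ^ 4
        - algebraMap S A (4 * a ^ 4 + 3 * (a * b)) * t ^ 5 := by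
  simp [twoTypicalNeg]

theorem aeval_twoTypicalNeg_sq (ht : t ^ 6 = 0) (a b : S) :
    aeval t (twoTypicalNeg a b) ^ 2 =
      t ^ 2 + algebraMap S A (2 * a) * t ^ 3 + algebraMap S A (3 * a ^ 2) * t ^ 4
        + algebraMap S A (6 * a ^ 3 + 2 * b) * t ^ 5 := by
  simp only [aeval_twoTypicalNeg, map_add, map_mul, map_pow, map_ofNat]
  grind

theorem aeval_twoTypicalNeg_pow_four (ht : t ^ 6 = 0) (a b : S) :
    aeval t (twoTypicalNeg a b) ^ 4 = t ^ 4 + algebraMap S A (4 * a) * t ^ 5 := by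
  rw [show 4 = 2 * 2 from rfl, pow_mul, aeval_twoTypicalNeg_sq ht]
  simp only [map_add, map_mul, map_pow, map_ofNat]
  grind

theorem aeval_twoTypicalLog_aeval_twoTypicalNeg (ht : t ^ 6 = 0) {l₁ l₂ a b : S}
    (ha : 2 * l₁ = a) (hb : 2 * l₂ = l₁ * a ^ 2 + b) :
    aeval (aeval t (twoTypicalNeg a b)) (twoTypicalLog l₁ l₂) =
      -aeval t (twoTypicalLog l₁ l₂) := by
  have coeff_three : l₁ * (2 * a) = a ^ 2 := by linear_combination a * ha
  have coeff_four : l₁ * (3 * a ^ 2) + l₂ = 2 * a ^ 3 + b - l₂ := by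
    linear_combination 2 * a ^ 2 * ha + hb
  have coeff_five : l₁ * (6 * a ^ 3 + 2 * b) + l₂ * (4 * a) = 4 * a ^ 4 + 3 * (a * b) := by
    linear_combination (4 * a ^ 3 + b) * ha + 2 * a * hb
  apply_fun algebraMap S A at ha coeff_three coeff_four coeff_five
  rw [aeval_twoTypicalLog, aeval_twoTypicalNeg_sq ht, aeval_twoTypicalNeg_pow_four ht,
    aeval_twoTypicalNeg, aeval_twoTypicalLog]
  simp only [map_add, map_sub, map_mul, map_pow, map_ofNat]
    at ha coeff_three coeff_four coeff_five ⊢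
  linear_combination t ^ 2 * ha + t ^ 3 * coeff_three + t ^ 4 * coeff_four + t ^ 5 * coeff_five

end Nilpotent

theorem stmt_1_general {S : Type*} [CommRing S] {l₁ l₂ a b : S}
    (ha : 2 * l₁ = a) (hb : 2 * l₂ = l₁ * a ^ 2 + b) :
    ∀ k ≤ 5, ((twoTypicalLog l₁ l₂).comp (twoTypicalNeg a b)).coeff k =
      (-twoTypicalLog l₁ l₂).coeff k := by
  have root_pow : AdjoinRoot.root (X ^ 6 : S[X]) ^ 6 = 0 := by
    rw [← AdjoinRoot.mk_X, ← map_pow, AdjoinRoot.mk_self]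
  have mk_comp := aeval_twoTypicalLog_aeval_twoTypicalNeg root_pow ha hb
  rw [← aeval_comp, ← map_neg, AdjoinRoot.aeval_eq, AdjoinRoot.aeval_eq] at mk_comp
  exact fun k hk ↦ adjoinRoot_mk_X_pow_eq_mk_iff.mp mk_comp k (Nat.lt_succ_of_le hk)

theorem two_mul_C_half_mul {σ : Type*} (p : MvPolynomial σ ℚ) :
    2 * (MvPolynomial.C (1 / 2 : ℚ) * p) = p := by
  rw [← mul_assoc, ← map_ofNat MvPolynomial.C 2, ← map_mul]
  norm_num

theorem hazewinkel_recursion_two :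
    2 * (MvPolynomial.C (1 / 4 : ℚ) * v₁ ^ 3 + MvPolynomial.C (1 / 2 : ℚ) * v₂) =
      MvPolynomial.C (1 / 2 : ℚ) * v₁ * v₁ ^ 2 + v₂ := by
  have two_mul_quarter : 2 * MvPolynomial.C (1 / 4 : ℚ) = (MvPolynomial.C (1 / 2 : ℚ) : Rv) := by
    rw [← map_ofNat MvPolynomial.C 2, ← map_mul]
    norm_num
  linear_combination v₁ ^ 3 * two_mul_quarter + two_mul_C_half_mul v₂

/-- `L(M(t)) ≡ −L(t) (mod t⁶)`: `M` is the formal inverse `[−1]_F(t)` of the universal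
2-typical formal group law modulo `t⁶`. -/
theorem stmt_1 : ∀ k ≤ 5, (Ltrunc.comp Mexp).coeff k = (-Ltrunc).coeff k :=
  stmt_1_general (two_mul_C_half_mul v₁) hazewinkel_recursion_two
end

section
/- For every n ≥ 1 and every integer i ≥ 2, in ℤ[x₁,…,xₙ] one has m_{(2,2,1^{i−2})} = σ₂·σᵢ − i·σ₁·σ_{i+1} + ((i² + i − 2)/2)·σ_{i+2}. (Note that (i² + i − 2)/2 = (i+2)(i−1)/2 is an integer.) -/
open MvPolynomial

/-- The monomial symmetric polynomial in `n` variables over `ℤ` associated with the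
multiset of (positive) parts `lam`: the sum of all distinct monomials whose multiset of
nonzero exponents equals `lam`. -/
noncomputable def mSym (n : ℕ) (lam : Multiset ℕ) : MvPolynomial (Fin n) ℤ :=
  ∑ f : Fin n → Fin (lam.sum + 1),
    if Multiset.map (fun i => (f i : ℕ)) (Finset.univ.filter fun i => (f i : ℕ) ≠ 0).val = lam
    then ∏ i, X i ^ (f i : ℕ) else 0

/-!
The product `σ_p σ_q` is a sum over pairs of sets `(S, T)` with `#S = p` and `#T = q`; the monomial
of `(S, T)` only depends on the disjoint sets `A = S ∆ T` and `B = S ∩ T`, on which the exponents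
are `1` and `2`. A given `(A, B)` comes from one pair for each choice of `S \ T ⊆ A`, whence
`σ_p σ_q = ∑_b (p+q-2b choose p-b) m_(2^b, 1^(p+q-2b))`. The cases `(p, q) = (0, i+2), (1, i+1),
(2, i)` form a triangular system, which is solved for `m_(2, 2, 1^(i-2))`.
-/

open Finset
open scoped symmDiff

section Pairs

variable {σ : Type*} [DecidableEq σ]

theorem card_add_card_eq_card_symmDiff_add_two_mul_card_inter (S T : Finset σ) :
    #S + #T = #(S ∆ T) + 2 * #(S ∩ T) := by
  have hST : #(S ∆ T) = #(S \ T) + #(T \ S) := card_union_of_disjoint disjoint_sdiff_sdiff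
  have hS := card_sdiff_add_card_inter S T
  have hT := card_sdiff_add_card_inter T S
  rw [inter_comm] at hT
  lia

theorem prod_mul_prod_eq_prod_symmDiff_mul_prod_inter_sq {M : Type*} [CommMonoid M]
    (S T : Finset σ) (x : σ → M) :
    (∏ i ∈ S, x i) * ∏ i ∈ T, x i = (∏ i ∈ S ∆ T, x i) * (∏ i ∈ S ∩ T, x i) ^ 2 := by
  have hdisj : Disjoint (S ∆ T) (S ∩ T) := disjoint_symmDiff_inf S T
  have hunion : S ∪ T = S ∆ T ∪ S ∩ T := (symmDiff_sup_inf S T).symm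
  rw [← prod_union_inter, hunion, prod_union hdisj, mul_assoc, sq]

variable [Fintype σ]

theorem card_filter_symmDiff_eq_and_inter_eq {A B : Finset σ} (hAB : Disjoint A B) {a p q : ℕ}
    (hp : p = a + #B) (hpq : p + q = #A + 2 * #B) :
    #{P ∈ powersetCard p univ ×ˢ powersetCard q univ | P.1 ∆ P.2 = A ∧ P.1 ∩ P.2 = B} =
      (#A).choose a := by
  rw [← card_powersetCard]
  refine card_nbij' (fun P => P.1 \ P.2) (fun U => (U ∪ B, (A \ U) ∪ B)) ?_ ?_ ?_ ?_
  · rintro ⟨S, T⟩ h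
    obtain ⟨⟨hS, -⟩, rfl, rfl⟩ := by simpa using h
    have := card_sdiff_add_card_inter S T
    exact mem_powersetCard.2 ⟨subset_union_left, by lia⟩
  · intro U hU
    obtain ⟨hUA, rfl⟩ := by simpa using hU
    have hS : #(U ∪ B) = #U + #B := card_union_of_disjoint (hAB.mono_left hUA)
    have hT : #(A \ U ∪ B) = #(A \ U) + #B := card_union_of_disjoint (hAB.mono_left sdiff_subset)
    have hA := card_sdiff_add_card_eq_card hUA
    rw [mem_coe, mem_filter, mem_product, mem_powersetCard_univ, mem_powersetCard_univ]
    rw [Finset.disjoint_left] at hAB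
    refine ⟨⟨by lia, by lia⟩, ?_, ?_⟩ <;> grind [mem_symmDiff]
  · rintro ⟨S, T⟩ h
    obtain ⟨-, rfl, rfl⟩ := by simpa using h
    ext <;> grind [mem_symmDiff]
  · intro U hU
    obtain ⟨hUA, -⟩ := by simpa using hU
    rw [Finset.disjoint_left] at hAB
    grind

variable (σ) in
/-- The disjoint pairs `(A, B)` with `#A = a` and `#B = b`. They index the monomials of exponent
type `(2^b, 1^a)`: `A` holds the variables of exponent `1`, and `B` those of exponent `2`. -/
def disjointPairs (a b : ℕ) : Finset (Finset σ × Finset σ) :=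
  {P | Disjoint P.1 P.2 ∧ #P.1 = a ∧ #P.2 = b}

theorem mem_disjointPairs {a b : ℕ} {P : Finset σ × Finset σ} :
    P ∈ disjointPairs σ a b ↔ Disjoint P.1 P.2 ∧ #P.1 = a ∧ #P.2 = b := by
  simp [disjointPairs]

theorem sum_symmDiff_inter_eq_sum_disjointPairs {M : Type*} [AddCommMonoid M] (p d : ℕ)
    (w : Finset σ × Finset σ → M) :
    ∑ P ∈ powersetCard p univ ×ˢ powersetCard (p + d) univ, w (P.1 ∆ P.2, P.1 ∩ P.2) =
      ∑ c ∈ antidiagonal p, (d + 2 * c.1).choose c.1 •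
        ∑ Q ∈ disjointPairs σ (d + 2 * c.1) c.2, w Q := by
  let shape (P : Finset σ × Finset σ) : (_ : ℕ × ℕ) × Finset σ × Finset σ :=
    ⟨(p - #(P.1 ∩ P.2), #(P.1 ∩ P.2)), (P.1 ∆ P.2, P.1 ∩ P.2)⟩
  have shape_mem : ∀ P ∈ powersetCard p univ ×ˢ powersetCard (p + d) univ,
      shape P ∈ (antidiagonal p).sigma fun c => disjointPairs σ (d + 2 * c.1) c.2 := by
    rintro ⟨S, T⟩ h
    obtain ⟨hS, hT⟩ := by simpa using h
    have hle : #(S ∩ T) ≤ #S := card_le_card inter_subset_left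
    have hcard := card_add_card_eq_card_symmDiff_add_two_mul_card_inter S T
    simp only [shape, mem_sigma, HasAntidiagonal.mem_antidiagonal, mem_disjointPairs]
    exact ⟨by lia, disjoint_symmDiff_inf S T, by lia, trivial⟩
  have shape_eq_iff (P : Finset σ × Finset σ) (a : ℕ) (A B : Finset σ) (hp : a + #B = p) :
      shape P = ⟨(a, #B), A, B⟩ ↔ P.1 ∆ P.2 = A ∧ P.1 ∩ P.2 = B := by
    grind
  rw [← sum_fiberwise_of_maps_to shape_mem, sum_sigma]
  simp only [smul_sum]
  refine sum_congr rfl fun (a, b) hc => sum_congr rfl fun (A, B) hQ => ?_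
  obtain ⟨hAB, hA : #A = d + 2 * a, rfl⟩ := mem_disjointPairs.1 hQ
  have hp : a + #B = p := HasAntidiagonal.mem_antidiagonal.1 hc
  simp only [shape_eq_iff _ a A B hp, ← hA]
  rw [← card_filter_symmDiff_eq_and_inter_eq hAB hp.symm (q := p + d) (by lia)]
  refine sum_eq_card_nsmul fun P hP => ?_
  rw [(mem_filter.1 hP).2.1, (mem_filter.1 hP).2.2]

end Pairs

section MonomialSymmetric

variable (σ : Type*) [Fintype σ] [DecidableEq σ]

/-- The monomial symmetric polynomial `m_(2^b, 1^a)` in the variables `σ`, its monomials given by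
their sets of variables of exponent `1` and `2`. Every `σ_p σ_q` is an `ℕ`-combination of these. -/
noncomputable def msymmTwoOne (R : Type*) [CommSemiring R] (b a : ℕ) : MvPolynomial σ R :=
  ∑ P ∈ disjointPairs σ a b, (∏ i ∈ P.1, X i) * (∏ i ∈ P.2, X i) ^ 2

theorem esymm_mul_esymm_add (R : Type*) [CommSemiring R] (p d : ℕ) :
    esymm σ R p * esymm σ R (p + d) =
      ∑ c ∈ antidiagonal p, (d + 2 * c.1).choose c.1 • msymmTwoOne σ R c.2 (d + 2 * c.1) := by
  simp only [msymmTwoOne]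
  rw [← sum_symmDiff_inter_eq_sum_disjointPairs p d fun Q : Finset σ × Finset σ =>
    (∏ i ∈ Q.1, (X i : MvPolynomial σ R)) * (∏ i ∈ Q.2, X i) ^ 2]
  simp only [esymm, sum_mul_sum, sum_product, prod_mul_prod_eq_prod_symmDiff_mul_prod_inter_sq]

theorem msymmTwoOne_zero (R : Type*) [CommSemiring R] (a : ℕ) :
    msymmTwoOne σ R 0 a = esymm σ R a := by
  simpa using (esymm_mul_esymm_add σ R 0 a).symm

theorem msymmTwoOne_one (R : Type*) [CommRing R] (a : ℕ) :
    msymmTwoOne σ R 1 a = esymm σ R 1 * esymm σ R (a + 1) - (a + 2) * esymm σ R (a + 2) := by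
  have h : esymm σ R 1 * esymm σ R (1 + a) =
      msymmTwoOne σ R 1 a + (a + 2) * esymm σ R (a + 2) := by
    simp [esymm_mul_esymm_add, Nat.antidiagonal_succ, msymmTwoOne_zero, -esymm_one]
  rw [add_comm a 1, h, add_sub_cancel_right]

end MonomialSymmetric

section Exponents

variable {ι : Type*} [Fintype ι]

/-- The exponents of the monomial `∏ i, X i ^ f i` that are not `0`, with multiplicity. -/
def nonzeroExponents (f : ι → ℕ) : Multiset ℕ :=
  (univ.filter fun i => f i ≠ 0).val.map f

theorem apply_mem_nonzeroExponents {f : ι → ℕ} {i : ι} (hi : f i ≠ 0) : f i ∈ nonzeroExponents f :=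
  Multiset.mem_map_of_mem f (mem_filter_univ i |>.2 hi)

theorem le_sum_nonzeroExponents (f : ι → ℕ) (i : ι) : f i ≤ (nonzeroExponents f).sum := by
  rcases eq_or_ne (f i) 0 with hi | hi
  · simp [hi]
  · exact Multiset.le_sum_of_mem (apply_mem_nonzeroExponents hi)

end Exponents

section TwoOneExponent

variable {σ : Type*} [DecidableEq σ]

/-- The exponent vector with value `1` on `A` and `2` on `B`, for disjoint `A` and `B`. -/
def twoOneExponent (A B : Finset σ) (i : σ) : ℕ :=
  if i ∈ A then 1 else if i ∈ B then 2 else 0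

variable [Fintype σ]

theorem filter_twoOneExponent_eq_one (A B : Finset σ) :
    univ.filter (twoOneExponent A B · = 1) = A := by
  grind [twoOneExponent]

theorem filter_twoOneExponent_eq_two {A B : Finset σ} (hAB : Disjoint A B) :
    univ.filter (twoOneExponent A B · = 2) = B := by
  grind [twoOneExponent, Finset.disjoint_left]

theorem nonzeroExponents_twoOneExponent {A B : Finset σ} (hAB : Disjoint A B) :
    nonzeroExponents (twoOneExponent A B) =
      Multiset.replicate #B 2 + Multiset.replicate #A 1 := by
  have hsupp : (univ.filter fun i => twoOneExponent A B i ≠ 0) = B.disjUnion A hAB.symm := by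
    ext i
    simp only [twoOneExponent, mem_disjUnion]
    grind
  have hB : ∀ i ∈ B.val, twoOneExponent A B i = 2 := fun i hi => by
    simp [twoOneExponent, disjoint_right.1 hAB hi, mem_def.2 hi]
  have hA : ∀ i ∈ A.val, twoOneExponent A B i = 1 := fun i hi => if_pos hi
  rw [nonzeroExponents, hsupp, disjUnion_val, Multiset.map_add, Multiset.map_congr rfl hB,
    Multiset.map_congr rfl hA]
  simp

theorem prod_pow_twoOneExponent {M : Type*} [CommMonoid M] {A B : Finset σ} (hAB : Disjoint A B)
    (x : σ → M) :
    ∏ i, x i ^ twoOneExponent A B i = (∏ i ∈ A, x i) * (∏ i ∈ B, x i) ^ 2 := by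
  have hfactor (i : σ) : x i ^ twoOneExponent A B i =
      (if i ∈ A then x i else 1) * (if i ∈ B then x i ^ 2 else 1) := by
    have hnotMem : i ∈ A → i ∉ B := fun hi => Finset.disjoint_left.1 hAB hi
    unfold twoOneExponent
    split_ifs <;> simp_all
  simp only [hfactor, prod_mul_distrib, prod_ite_mem, univ_inter, prod_pow]

theorem eq_twoOneExponent_of_nonzeroExponents_eq {f : σ → ℕ} {a b : ℕ}
    (hf : nonzeroExponents f = Multiset.replicate b 2 + Multiset.replicate a 1) :
    f = twoOneExponent (univ.filter (f · = 1)) (univ.filter (f · = 2)) := by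
  have hvalues (i : σ) (hi : f i ≠ 0) : f i = 2 ∨ f i = 1 := by
    have hmem := apply_mem_nonzeroExponents hi
    rw [hf, Multiset.mem_add] at hmem
    exact hmem.imp Multiset.eq_of_mem_replicate Multiset.eq_of_mem_replicate
  funext i
  simp only [twoOneExponent, mem_filter_univ]
  grind

theorem filter_mem_disjointPairs_of_nonzeroExponents_eq {f : σ → ℕ} {a b : ℕ}
    (hf : nonzeroExponents f = Multiset.replicate b 2 + Multiset.replicate a 1) :
    (univ.filter (f · = 1), univ.filter (f · = 2)) ∈ disjointPairs σ a b := by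
  have hdisj : Disjoint (univ.filter (f · = 1)) (univ.filter (f · = 2)) := by
    grind [Finset.disjoint_left]
  have hparts := nonzeroExponents_twoOneExponent hdisj
  rw [← eq_twoOneExponent_of_nonzeroExponents_eq hf, hf] at hparts
  have hones : a = #(univ.filter (f · = 1)) := by
    simpa [Multiset.count_replicate] using congrArg (Multiset.count 1) hparts
  have htwos : b = #(univ.filter (f · = 2)) := by
    simpa [Multiset.count_replicate] using congrArg (Multiset.count 2) hparts
  exact mem_disjointPairs.2 ⟨hdisj, hones.symm, htwos.symm⟩

end TwoOneExponent

theorem mSym_replicate_two_add_replicate_one (n b a : ℕ) :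
    mSym n (Multiset.replicate b 2 + Multiset.replicate a 1) = msymmTwoOne (Fin n) ℤ b a := by
  rw [mSym, msymmTwoOne, ← sum_filter]
  refine sum_nbij
    (fun f => (univ.filter fun i => (f i : ℕ) = 1, univ.filter fun i => (f i : ℕ) = 2)) ?_ ?_ ?_ ?_
  · intro f hf
    exact filter_mem_disjointPairs_of_nonzeroExponents_eq (mem_filter_univ f |>.1 hf)
  · intro f hf g hg hfg
    rw [mem_coe, mem_filter_univ] at hf hg
    rw [Prod.mk.injEq] at hfg
    have hval : (fun i => (f i : ℕ)) = fun i => (g i : ℕ) := by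
      rw [eq_twoOneExponent_of_nonzeroExponents_eq hf, hfg.1, hfg.2,
        ← eq_twoOneExponent_of_nonzeroExponents_eq hg]
    exact funext fun i => Fin.ext (congrFun hval i)
  · rintro ⟨A, B⟩ hAB
    obtain ⟨hdisj, rfl, rfl⟩ := mem_disjointPairs.1 hAB
    have hparts := nonzeroExponents_twoOneExponent hdisj
    have hbound := hparts ▸ le_sum_nonzeroExponents (twoOneExponent A B)
    exact ⟨fun i => ⟨twoOneExponent A B i, Nat.lt_succ_of_le (hbound i)⟩,
      mem_filter_univ _ |>.2 hparts,
      Prod.ext (filter_twoOneExponent_eq_one A B) (filter_twoOneExponent_eq_two hdisj)⟩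
  · intro f hf
    have hf := mem_filter_univ f |>.1 hf
    have hdisj := (mem_disjointPairs.1 (filter_mem_disjointPairs_of_nonzeroExponents_eq hf)).1
    rw [← prod_pow_twoOneExponent hdisj, ← eq_twoOneExponent_of_nonzeroExponents_eq hf]

theorem stmt_10_general (σ R : Type*) [Fintype σ] [DecidableEq σ] [CommRing R]
    {i : ℕ} (hi : 2 ≤ i) :
    msymmTwoOne σ R 2 (i - 2) = esymm σ R 2 * esymm σ R i - i * esymm σ R 1 * esymm σ R (i + 1)
      + (((i : ℤ) ^ 2 + i - 2) / 2 : ℤ) * esymm σ R (i + 2) := by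
  obtain ⟨a, rfl⟩ := Nat.exists_eq_add_of_le' hi
  have h : esymm σ R 2 * esymm σ R (2 + a) = msymmTwoOne σ R 2 a +
      ((a + 2) * msymmTwoOne σ R 1 (a + 2) + (a + 4).choose 2 * esymm σ R (a + 4)) := by
    simp [esymm_mul_esymm_add, Nat.antidiagonal_succ, msymmTwoOne_zero]
  have hcoeff : (((a + 2 : ℕ) : ℤ) ^ 2 + (a + 2 : ℕ) - 2) / 2 =
      (a + 2) * (a + 4) - (a + 4).choose 2 := by
    have hchoose : ((a : ℤ) + 4) * (a + 3) = (a + 4).choose 2 * 2 := by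
      have := Nat.add_one_mul_choose_eq (a + 3) 1
      rw [Nat.choose_one_right] at this
      exact_mod_cast this
    refine Int.ediv_eq_of_eq_mul_left two_ne_zero ?_
    push_cast
    linear_combination -hchoose
  rw [hcoeff, add_comm a 2, h, add_comm 2 a, msymmTwoOne_one]
  push_cast
  ring

theorem stmt_10 (n : ℕ) (hn : 1 ≤ n) (i : ℕ) (hi : 2 ≤ i) :
    mSym n (2 ::ₘ 2 ::ₘ Multiset.replicate (i - 2) 1)
      = esymm (Fin n) ℤ 2 * esymm (Fin n) ℤ (i) - C (((i : ℤ) : ℤ)) * esymm (Fin n) ℤ 1 * esymm (Fin n) ℤ (i + 1)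
        + C ((((i : ℤ)^2 + (i : ℤ) - 2) / 2 : ℤ)) * esymm (Fin n) ℤ (i + 2) := by
  simpa [Multiset.replicate_succ] using
    (mSym_replicate_two_add_replicate_one n 2 (i - 2)).trans (stmt_10_general (Fin n) ℤ hi)
end

section
/- For every n ≥ 1 and every integer i ≥ 2, in ℤ[x₁,…,xₙ] one has m_{(3,2,1^{i−2})} = σ₁·σ₂·σᵢ − 3·σ₃·σᵢ + (2i−2)·σ₂·σ_{i+1} − i·σ₁²·σ_{i+1} + (2i+1)·σ₁·σ_{i+2} − (i² + 2i − 3)·σ_{i+3}. -/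
open MvPolynomial

/-!
Multiplying `m_lam` by a power sum `p_k` raises one exponent by `k`, so `p_k * m_lam` is an
explicit combination of the `m_mu` where `mu` arises from `lam` by raising one part (possibly `0`)
by `k`. Hence `p_2 * m_(2,1^(j+1)) = 2 m_(2,2,1^(j+1)) + m_(3,2,1^j) + m_(4,1^(j+1))`. The first
unwanted term occurs with the same coefficient `2` in `σ_1 * m_(2,1^(j+2))`, the other one in
`p_3 * σ_(j+2)`, and what then remains are hooks `m_(2,1^l)` and `m_(3,1^l)`, which come from
`σ_1 * σ_(l+1)` and `p_2 * σ_(l+1)`. Newton's identities eliminate `p_2` and `p_3`.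
-/

section Exponents

variable {σ : Type*} {d : σ →₀ ℕ} {k : ℕ}

/-- The multiset of nonzero exponents of the monomial `X ^ d`. -/
def exponents (d : σ →₀ ℕ) : Multiset ℕ :=
  d.support.val.map d

lemma zero_notMem_exponents (d : σ →₀ ℕ) : 0 ∉ exponents d := by
  simp [exponents]

lemma sum_exponents [Fintype σ] (d : σ →₀ ℕ) : (exponents d).sum = ∑ i, d i :=
  Finset.sum_subset d.support.subset_univ fun _ _ hi => Finsupp.notMem_support_iff.mp hi

lemma exponents_apply_erase (d : σ →₀ ℕ) (i : σ) :
    exponents (d.erase i) = (exponents d).erase (d i) := by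
  classical
  by_cases hi : i ∈ d.support
  · have hcongr : ∀ j ∈ d.support.erase i, d.erase i j = d j := fun j hj =>
      Finsupp.erase_ne (Finset.ne_of_mem_erase hj)
    rw [exponents, Finsupp.support_erase, Multiset.map_congr rfl hcongr, Finset.erase_val,
      Multiset.map_erase_of_mem _ _ hi, exponents]
  · rw [Finsupp.erase_of_notMem_support hi, Finsupp.notMem_support_iff.mp hi,
      Multiset.erase_of_notMem (zero_notMem_exponents d)]

lemma exponents_add_single (hk : k ≠ 0) (d : σ →₀ ℕ) (i : σ) :
    exponents (d + Finsupp.single i k) = (d i + k) ::ₘ (exponents d).erase (d i) := by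
  have hki : (d + Finsupp.single i k) i = d i + k := by simp
  have hmem : d i + k ∈ exponents (d + Finsupp.single i k) :=
    Multiset.mem_map.mpr ⟨i, by simp [hk], hki⟩
  have herase : (d + Finsupp.single i k).erase i = d.erase i := by simp
  rw [← exponents_apply_erase, ← herase, exponents_apply_erase, hki, Multiset.cons_erase hmem]

lemma count_exponents [Fintype σ] (hk : k ≠ 0) (d : σ →₀ ℕ) :
    (exponents d).count k = Finset.card {i | d i = k} := by
  rw [exponents, Multiset.count_map, ← Finset.filter_val, Finset.card_val]
  congr 1
  ext i
  simp only [Finset.mem_filter, Finsupp.mem_support_iff, Finset.mem_univ, true_and, eq_comm]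
  exact ⟨And.right, fun h => ⟨h ▸ hk, h⟩⟩

lemma indicator_support_one_eq_iff :
    Finsupp.indicator d.support (fun _ _ => 1) = d ↔ ∀ i ∈ d.support, d i = 1 := by
  refine ⟨fun h i hi => by rw [← h, Finsupp.indicator_of_mem hi], fun h => ?_⟩
  ext i
  by_cases hi : i ∈ d.support
  · rw [Finsupp.indicator_of_mem hi, h i hi]
  · rw [Finsupp.indicator_of_notMem hi, Finsupp.notMem_support_iff.mp hi]

lemma exponents_eq_replicate_one_iff {n : ℕ} :
    exponents d = Multiset.replicate n 1 ↔
      d.support.card = n ∧ Finsupp.indicator d.support (fun _ _ => 1) = d := by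
  simp [exponents, Multiset.eq_replicate, indicator_support_one_eq_iff]

lemma exponents_add_single_eq_iff {lam : Multiset ℕ} (hlam : 0 ∉ lam) (hk : k ≠ 0) (i : σ) :
    (d i ∈ insert 0 lam.toFinset ∧
      exponents (d + Finsupp.single i k) = (d i + k) ::ₘ lam.erase (d i)) ↔ exponents d = lam := by
  rw [exponents_add_single hk, Multiset.cons_inj_right, Finset.mem_insert, Multiset.mem_toFinset]
  constructor
  · rintro ⟨hi, h⟩
    by_cases h0 : d i = 0
    · rwa [h0, Multiset.erase_of_notMem hlam,
        Multiset.erase_of_notMem (zero_notMem_exponents d)] at h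
    · have hd : d i ∈ exponents d :=
        Multiset.mem_map.mpr ⟨i, Finsupp.mem_support_iff.mpr h0, rfl⟩
      rw [← Multiset.cons_erase hd, h, Multiset.cons_erase (hi.resolve_left h0)]
  · rintro rfl
    refine ⟨or_iff_not_imp_left.mpr fun h0 => ?_, rfl⟩
    exact Multiset.mem_map.mpr ⟨i, Finsupp.mem_support_iff.mpr h0, rfl⟩

end Exponents

section MonomialSymm

variable (σ R : Type*) [Fintype σ] [DecidableEq σ] [CommSemiring R]

/-- The monomial symmetric polynomial `m_lam` over any commutative semiring and any finite type of
variables; it vanishes if `0 ∈ lam`. Restricting to exponent vectors of total degree `lam.sum` only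
serves to make the index set a `Finset`. -/
noncomputable def monomialSymm (lam : Multiset ℕ) : MvPolynomial σ R :=
  ∑ d ∈ Finset.univ.finsuppAntidiag lam.sum with exponents d = lam, monomial d 1

lemma mem_filter_exponents_eq {lam : Multiset ℕ} {d : σ →₀ ℕ} :
    d ∈ (Finset.univ.finsuppAntidiag lam.sum).filter (exponents · = lam) ↔ exponents d = lam := by
  rw [Finset.mem_filter, and_iff_right_iff_imp]
  rintro rfl
  simp [sum_exponents]

lemma coeff_monomialSymm (lam : Multiset ℕ) (d : σ →₀ ℕ) :
    coeff d (monomialSymm σ R lam) = if exponents d = lam then 1 else 0 := by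
  simp only [monomialSymm, coeff_sum, coeff_monomial, Finset.sum_ite_eq', mem_filter_exponents_eq]

lemma monomialSymm_replicate_one (j : ℕ) :
    monomialSymm σ R (Multiset.replicate j 1) = esymm σ R j := by
  rw [monomialSymm, esymm_eq_sum_monomial]
  simp only [← Finsupp.indicator_eq_sum_single _ fun _ : σ => 1]
  have hsupport (t : Finset σ) : (Finsupp.indicator t fun _ _ => 1).support = t := by
    ext i
    simp
  have hmem {d : σ →₀ ℕ} := (mem_filter_exponents_eq (d := d)).trans
    (exponents_eq_replicate_one_iff (n := j))
  refine Finset.sum_nbij' Finsupp.support (fun t => Finsupp.indicator t fun _ _ => 1)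
    ?_ ?_ ?_ ?_ ?_
  · exact fun d hd => Finset.mem_powersetCard_univ.mpr (hmem.mp hd).1
  · intro t ht
    rw [hmem, hsupport]
    exact ⟨Finset.mem_powersetCard_univ.mp ht, rfl⟩
  · exact fun d hd => (hmem.mp hd).2
  · exact fun t _ => hsupport t
  · intro d hd
    rw [(hmem.mp hd).2]

lemma mSym_eq_monomialSymm (n : ℕ) (lam : Multiset ℕ) :
    mSym n lam = monomialSymm (Fin n) ℤ lam := by
  have hexp (f : Fin n → Fin (lam.sum + 1)) :
      Multiset.map (fun i => (f i : ℕ)) (Finset.univ.filter fun i => (f i : ℕ) ≠ 0).val =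
        exponents (Finsupp.equivFunOnFinite.symm fun i => (f i : ℕ)) := by
    rw [exponents]
    congr 2
    ext i
    simp
  rw [mSym, ← Finset.sum_filter, monomialSymm]
  refine Finset.sum_nbij (fun f => Finsupp.equivFunOnFinite.symm fun i => (f i : ℕ)) ?_ ?_ ?_ ?_
  · intro f hf
    rw [mem_filter_exponents_eq, ← hexp]
    exact (Finset.mem_filter.mp hf).2
  · intro f _ g _ hfg
    ext i
    exact DFunLike.congr_fun hfg i
  · intro d hd
    rw [Finset.mem_coe, mem_filter_exponents_eq] at hd
    have hle (i : Fin n) : d i ≤ lam.sum := by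
      rw [← hd, sum_exponents]
      exact Finset.single_le_sum (fun _ _ => Nat.zero_le _) (Finset.mem_univ i)
    let f : Fin n → Fin (lam.sum + 1) := fun i => ⟨d i, Nat.lt_succ_of_le (hle i)⟩
    have hfd : (Finsupp.equivFunOnFinite.symm fun i => (f i : ℕ)) = d := by
      ext i
      rfl
    refine ⟨f, ?_, hfd⟩
    rw [Finset.mem_coe, Finset.mem_filter, hexp, hfd]
    exact ⟨Finset.mem_univ f, hd⟩
  · intro f _
    simp [monomial_eq, Finsupp.prod_fintype]

/-- The coefficient `lam.count (c + k) + 1` is the multiplicity of `c + k` in the new partition: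
any variable of exponent `c + k` may be the one whose exponent `c` was raised. The value `c = 0`
stands for a variable absent from the monomial. -/
theorem psum_mul_monomialSymm {k : ℕ} (hk : k ≠ 0) {lam : Multiset ℕ} (hlam : 0 ∉ lam) :
    psum σ R k * monomialSymm σ R lam =
      ∑ c ∈ insert 0 lam.toFinset,
        (lam.count (c + k) + 1) • monomialSymm σ R ((c + k) ::ₘ lam.erase c) := by
  ext d
  have hcount (c : ℕ) :
      coeff d ((lam.count (c + k) + 1) • monomialSymm σ R ((c + k) ::ₘ lam.erase c)) =
      ∑ i, if d i = c + k ∧ exponents d = (c + k) ::ₘ lam.erase c then (1 : R) else 0 := by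
    rw [coeff_smul, coeff_monomialSymm]
    split_ifs with h
    · have hmult : Finset.card {i | d i = c + k} = lam.count (c + k) + 1 := by
        rw [← count_exponents (by omega), h, Multiset.count_cons_self,
          Multiset.count_erase_of_ne (by omega)]
      simp [h, hmult]
    · simp [h]
  rw [psum, Finset.sum_mul, coeff_sum, coeff_sum, Finset.sum_congr rfl fun c _ => hcount c,
    Finset.sum_comm]
  refine Finset.sum_congr rfl fun i _ => ?_
  rw [X_pow_eq_monomial, coeff_monomial_mul', one_mul, coeff_monomialSymm]
  by_cases hki : k ≤ d i
  · obtain ⟨e, rfl⟩ := exists_add_of_le (Finsupp.single_le_iff.mpr hki)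
    simp [← exponents_add_single_eq_iff hlam hk i, ite_and, add_comm (Finsupp.single i k) e]
  · rw [if_neg (mt Finsupp.single_le_iff.mp hki), Finset.sum_eq_zero]
    exact fun c _ => if_neg fun ⟨hc, _⟩ => hki (hc ▸ Nat.le_add_left k c)

lemma psum_mul_esymm_succ {k : ℕ} (hk : k ≠ 0) (j : ℕ) :
    psum σ R k * esymm σ R (j + 1) =
      ((Multiset.replicate (j + 1) 1).count k + 1) •
        monomialSymm σ R (k ::ₘ Multiset.replicate (j + 1) 1) +
      monomialSymm σ R ((k + 1) ::ₘ Multiset.replicate j 1) := by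
  have hzero : 0 ∉ Multiset.replicate (j + 1) 1 := by simp [Multiset.mem_replicate]
  have hparts : insert 0 (Multiset.replicate (j + 1) 1).toFinset = {0, 1} := by
    rw [Multiset.toFinset_replicate, if_neg j.succ_ne_zero]
  rw [← monomialSymm_replicate_one, psum_mul_monomialSymm σ R hk hzero, hparts,
    Finset.sum_pair zero_ne_one, Multiset.erase_of_notMem hzero]
  simp [Multiset.count_replicate, hk, add_comm 1 k]

lemma psum_mul_monomialSymm_cons_replicate_one {k a : ℕ} (hk : k ≠ 0) (ha : 2 ≤ a) (j : ℕ) :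
    psum σ R k * monomialSymm σ R (a ::ₘ Multiset.replicate (j + 1) 1) =
      ((a ::ₘ Multiset.replicate (j + 1) 1).count k + 1) •
        monomialSymm σ R (k ::ₘ a ::ₘ Multiset.replicate (j + 1) 1) +
      (if k + 1 = a then 2 else 1) •
        monomialSymm σ R ((k + 1) ::ₘ a ::ₘ Multiset.replicate j 1) +
      monomialSymm σ R ((a + k) ::ₘ Multiset.replicate (j + 1) 1) := by
  have hzero : 0 ∉ a ::ₘ Multiset.replicate (j + 1) 1 := by
    simp [Multiset.mem_replicate, show 0 ≠ a by omega]
  have hparts : insert 0 (a ::ₘ Multiset.replicate (j + 1) 1).toFinset = {0, 1, a} := by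
    rw [Multiset.toFinset_cons, Multiset.toFinset_replicate, if_neg j.succ_ne_zero,
      Finset.pair_comm]
  have hcount_one : (a ::ₘ Multiset.replicate (j + 1) 1).count (1 + k) + 1 =
      if k + 1 = a then 2 else 1 := by
    rw [Multiset.count_cons, Multiset.count_replicate, if_neg (by omega), add_comm 1 k]
    split_ifs <;> rfl
  have hcount_self : (a ::ₘ Multiset.replicate (j + 1) 1).count (a + k) + 1 = 1 := by
    rw [Multiset.count_cons, Multiset.count_replicate, if_neg (by omega), if_neg (by omega)]
  have herase_one : (a ::ₘ Multiset.replicate (j + 1) 1).erase 1 =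
      a ::ₘ Multiset.replicate j 1 := by
    rw [Multiset.erase_cons_tail _ (by omega), Multiset.replicate_succ, Multiset.erase_cons_head]
  rw [psum_mul_monomialSymm σ R hk hzero, hparts,
    Finset.sum_insert (by simp only [Finset.mem_insert, Finset.mem_singleton]; omega),
    Finset.sum_pair (by omega), Multiset.erase_of_notMem hzero, herase_one,
    Multiset.erase_cons_head, hcount_one, hcount_self, zero_add, one_smul, add_comm 1 k, add_assoc]

lemma psum_two_mul_monomialSymm_two_cons_replicate_one (j : ℕ) :
    psum σ R 2 * monomialSymm σ R (2 ::ₘ Multiset.replicate (j + 1) 1) =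
      2 * monomialSymm σ R (2 ::ₘ 2 ::ₘ Multiset.replicate (j + 1) 1) +
      monomialSymm σ R (3 ::ₘ 2 ::ₘ Multiset.replicate j 1) +
      monomialSymm σ R (4 ::ₘ Multiset.replicate (j + 1) 1) := by
  have h := psum_mul_monomialSymm_cons_replicate_one σ R two_ne_zero le_rfl j
  rw [Multiset.count_cons_self, Multiset.count_replicate, if_neg (by decide),
    if_neg (by decide), one_smul, nsmul_eq_mul] at h
  exact_mod_cast h

lemma esymm_one_mul_monomialSymm_two_cons_replicate_one (j : ℕ) :
    esymm σ R 1 * monomialSymm σ R (2 ::ₘ Multiset.replicate (j + 1) 1) =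
      (j + 2) * monomialSymm σ R (2 ::ₘ Multiset.replicate (j + 2) 1) +
      2 * monomialSymm σ R (2 ::ₘ 2 ::ₘ Multiset.replicate j 1) +
      monomialSymm σ R (3 ::ₘ Multiset.replicate (j + 1) 1) := by
  have h := psum_mul_monomialSymm_cons_replicate_one σ R one_ne_zero le_rfl j
  rw [psum_one, ← esymm_one, Multiset.count_cons_of_ne (by decide), Multiset.count_replicate_self,
    Multiset.cons_swap, ← Multiset.replicate_succ, if_pos rfl] at h
  rw [h, nsmul_eq_mul, nsmul_eq_mul]
  push_cast
  ring

end MonomialSymm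

section CommRing

variable (σ R : Type*) [Fintype σ] [CommRing R]

lemma psum_two_eq : psum σ R 2 = esymm σ R 1 ^ 2 - 2 * esymm σ R 2 := by
  have hindex :
      {a ∈ Finset.HasAntidiagonal.antidiagonal 2 | a.1 ∈ Set.Ioo 0 2} = {(1, 1)} := by
    decide
  rw [psum_eq_mul_esymm_sub_sum σ R 2 two_pos, hindex, Finset.sum_singleton, psum_one,
    ← esymm_one]
  ring

lemma psum_three_eq :
    psum σ R 3 = esymm σ R 1 ^ 3 - 3 * esymm σ R 1 * esymm σ R 2 + 3 * esymm σ R 3 := by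
  have hindex :
      {a ∈ Finset.HasAntidiagonal.antidiagonal 3 | a.1 ∈ Set.Ioo 0 3} = {(1, 2), (2, 1)} := by
    decide
  rw [psum_eq_mul_esymm_sub_sum σ R 3 three_pos, hindex, Finset.sum_pair (by decide),
    psum_two_eq, psum_one, ← esymm_one]
  push_cast
  ring

variable [DecidableEq σ]

lemma monomialSymm_two_cons_replicate_one (j : ℕ) :
    monomialSymm σ R (2 ::ₘ Multiset.replicate j 1) =
      esymm σ R 1 * esymm σ R (j + 1) - (j + 2) * esymm σ R (j + 2) := by
  have h := psum_mul_esymm_succ σ R one_ne_zero j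
  rw [psum_one, ← esymm_one, Multiset.count_replicate_self, ← Multiset.replicate_succ,
    monomialSymm_replicate_one, nsmul_eq_mul] at h
  push_cast at h
  linear_combination -h

lemma monomialSymm_succ_cons_replicate_one {k : ℕ} (hk : 2 ≤ k) (j : ℕ) :
    monomialSymm σ R ((k + 1) ::ₘ Multiset.replicate j 1) =
      psum σ R k * esymm σ R (j + 1) - monomialSymm σ R (k ::ₘ Multiset.replicate (j + 1) 1) := by
  have h := psum_mul_esymm_succ σ R (by omega : k ≠ 0) j
  rw [Multiset.count_replicate, if_neg (by omega), zero_add, one_smul] at h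
  exact eq_sub_of_add_eq' h.symm

lemma monomialSymm_three_cons_two_cons_replicate_one (j : ℕ) :
    monomialSymm σ R (3 ::ₘ 2 ::ₘ Multiset.replicate j 1) =
      psum σ R 2 * monomialSymm σ R (2 ::ₘ Multiset.replicate (j + 1) 1) -
      esymm σ R 1 * monomialSymm σ R (2 ::ₘ Multiset.replicate (j + 2) 1) +
      (j + 3) * monomialSymm σ R (2 ::ₘ Multiset.replicate (j + 3) 1) +
      2 * monomialSymm σ R (3 ::ₘ Multiset.replicate (j + 2) 1) -
      psum σ R 3 * esymm σ R (j + 2) := by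
  have hp₂ := psum_two_mul_monomialSymm_two_cons_replicate_one σ R j
  have he₁ := esymm_one_mul_monomialSymm_two_cons_replicate_one σ R (j + 1)
  have hm₄ := monomialSymm_succ_cons_replicate_one σ R (k := 3) (by decide) (j + 1)
  push_cast at he₁
  linear_combination he₁ - hp₂ - hm₄

end CommRing

theorem stmt_13_general (σ R : Type*) [Fintype σ] [DecidableEq σ] [CommRing R] {i : ℕ}
    (hi : 2 ≤ i) :
    monomialSymm σ R (3 ::ₘ 2 ::ₘ Multiset.replicate (i - 2) 1) =
      esymm σ R 1 * esymm σ R 2 * esymm σ R i - 3 * esymm σ R 3 * esymm σ R i +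
        (2 * i - 2) * esymm σ R 2 * esymm σ R (i + 1) - i * esymm σ R 1 ^ 2 * esymm σ R (i + 1) +
        (2 * i + 1) * esymm σ R 1 * esymm σ R (i + 2) -
        (i ^ 2 + 2 * i - 3) * esymm σ R (i + 3) := by
  obtain ⟨j, rfl⟩ := Nat.exists_eq_add_of_le' hi
  rw [Nat.add_sub_cancel, monomialSymm_three_cons_two_cons_replicate_one,
    monomialSymm_succ_cons_replicate_one σ R le_rfl]
  simp only [monomialSymm_two_cons_replicate_one, psum_two_eq, psum_three_eq]
  push_cast
  ring

theorem stmt_13 (n : ℕ) (hn : 1 ≤ n) (i : ℕ) (hi : 2 ≤ i) :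
    mSym n (3 ::ₘ 2 ::ₘ Multiset.replicate (i - 2) 1)
      = esymm (Fin n) ℤ 1 * esymm (Fin n) ℤ 2 * esymm (Fin n) ℤ (i) - C ((3 : ℤ)) * esymm (Fin n) ℤ 3 * esymm (Fin n) ℤ (i)
        + C ((2 * (i : ℤ) - 2 : ℤ)) * esymm (Fin n) ℤ 2 * esymm (Fin n) ℤ (i + 1) - C (((i : ℤ) : ℤ)) * esymm (Fin n) ℤ 1^2 * esymm (Fin n) ℤ (i + 1)
        + C ((2 * (i : ℤ) + 1 : ℤ)) * esymm (Fin n) ℤ 1 * esymm (Fin n) ℤ (i + 2)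
        - C (((i : ℤ)^2 + 2 * (i : ℤ) - 3 : ℤ)) * esymm (Fin n) ℤ (i + 3) := by
  simpa [mSym_eq_monomialSymm, -esymm_one] using stmt_13_general (Fin n) ℤ hi
end

section
/- For every n ≥ 1 and every integer i ≥ 3, in ℤ[x₁,…,xₙ] one has m_{(3,2,2,1^{i−3})} = σ₁·σ₃·σᵢ − 4·σ₄·σᵢ + (3i−6)·σ₃·σ_{i+1} − (i−1)·σ₁·σ₂·σ_{i+1} − (i² − 4i)·σ₂·σ_{i+2} + ((i² − i − 2)/2)·σ₁²·σ_{i+2} − ((3i² − i − 10)/2)·σ₁·σ_{i+3} + ((i³ + i² − 10i + 8)/2)·σ_{i+4}. (All displayed rational coefficients are integers for integer i.) -/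
open MvPolynomial

/-!
Adding `r` to one exponent of a monomial gives the Pieri rule for `p_r * m_λ`. For `r = 1` and
`λ = (2³, 1^q)` the only term outside the family `(2^p, 1^q)` is `m_(3, 2, 2, 1^q)`, which is thus
expressed by `σ₁ * m_(2³, 1^q)`, `m_(2⁴, 1^(q - 1))` and `m_(2³, 1^(q + 1))`. Those are polynomials
in the `σ_k` because `σ_b * σ_c = ∑ p, (b + c - 2p).choose (b - p) * m_(2^p, 1^(b + c - 2p))` is
triangular in `p`, with leading coefficient `1`. Multiplying by `p!` turns the binomial coefficients
into polynomials in `q`, which can then be compared by ring arithmetic.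
-/

section ExponentType

variable {σ : Type*}

/-- The multiset of nonzero exponents of the monomial `x ^ d`: the partition `λ` such that `x ^ d`
is one of the monomials of `m_λ`. -/
def exponentType (d : σ →₀ ℕ) : Multiset ℕ :=
  d.support.val.map d

theorem mem_exponentType {d : σ →₀ ℕ} {k : ℕ} :
    k ∈ exponentType d ↔ k ≠ 0 ∧ ∃ i, d i = k := by
  simp only [exponentType, Multiset.mem_map, Finset.mem_val, Finsupp.mem_support_iff]
  grind

theorem count_exponentType [Fintype σ] (d : σ →₀ ℕ) {k : ℕ} (hk : k ≠ 0) :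
    (exponentType d).count k = Finset.card {i | d i = k} := by
  rw [exponentType, Multiset.count_map, ← Finset.filter_val, Finset.card_val]
  congr 1
  ext i
  simp only [Finset.mem_filter, Finsupp.mem_support_iff, Finset.mem_univ, true_and]
  grind

theorem exponentType_eq_cons_erase {d : σ →₀ ℕ} {i : σ} (hi : d i ≠ 0) :
    exponentType d = d i ::ₘ exponentType (d.erase i) := by
  classical
  have herase : exponentType (d.erase i) = (d.support.erase i).val.map d := by
    rw [exponentType, Finsupp.support_erase]
    exact Multiset.map_congr rfl fun j hj => Finsupp.erase_ne (Finset.ne_of_mem_erase hj)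
  have hmem : i ∈ d.support.val := Finsupp.mem_support_iff.2 hi
  rw [herase, ← Multiset.map_cons, Finset.erase_val, Multiset.cons_erase hmem, exponentType]

theorem exponentType_tsub_single_eq_iff {d : σ →₀ ℕ} {i : σ} {k r : ℕ} {lam : Multiset ℕ}
    (hr : r ≠ 0) (hlam : 0 ∉ lam) (hi : d i = k + r) :
    exponentType (d - Finsupp.single i r) = lam ↔
      k ∈ 0 ::ₘ lam ∧ exponentType d = (k + r) ::ₘ lam.erase k := by
  have herase : (d - Finsupp.single i r).erase i = d.erase i := by
    ext j
    by_cases hj : j = i <;> simp [hj]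
  have hsub : (d - Finsupp.single i r) i = k := by simp [hi]
  rw [exponentType_eq_cons_erase (d := d) (i := i) (by lia), hi, Multiset.cons_inj_right]
  obtain rfl | hk := eq_or_ne k 0
  · rw [← herase, Finsupp.erase_of_notMem_support (by simp [hsub]),
      Multiset.erase_of_notMem hlam]
    simp only [Multiset.mem_cons_self, true_and]
  · rw [exponentType_eq_cons_erase (by rwa [hsub]), hsub, herase, Multiset.mem_cons,
      or_iff_right hk]
    constructor
    · rintro rfl
      simp only [Multiset.mem_cons_self, Multiset.erase_cons_head, and_self]
    · rintro ⟨hmem, h⟩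
      rw [h, Multiset.cons_erase hmem]

end ExponentType

section Pieri

variable {n : ℕ}

theorem coeff_mSym (lam : Multiset ℕ) (d : Fin n →₀ ℕ) :
    coeff d (mSym n lam) = if exponentType d = lam then 1 else 0 := by
  let toExponent (f : Fin n → Fin (lam.sum + 1)) : Fin n →₀ ℕ :=
    Finsupp.equivFunOnFinite.symm fun i => f i
  have htype (f : Fin n → Fin (lam.sum + 1)) :
      Multiset.map (fun i => (f i : ℕ)) (Finset.univ.filter fun i => (f i : ℕ) ≠ 0).val
        = exponentType (toExponent f) := by
    rw [exponentType, show (toExponent f).support = Finset.univ.filter fun i => (f i : ℕ) ≠ 0 by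
      ext; simp [toExponent]]
    rfl
  have hmonomial (f : Fin n → Fin (lam.sum + 1)) :
      ∏ i, X i ^ (f i : ℕ) = monomial (toExponent f) (1 : ℤ) := by
    rw [monic_monomial_eq, Finsupp.prod_fintype _ _ fun _ => pow_zero _]
    rfl
  simp only [mSym, htype, hmonomial, coeff_sum, apply_ite (coeff d), coeff_monomial, coeff_zero]
  split_ifs with hd
  · have hbound (i : Fin n) : d i < lam.sum + 1 := by
      by_cases hi : d i = 0
      · lia
      · exact Nat.lt_succ_of_le (Multiset.le_sum_of_mem (hd ▸ mem_exponentType.2 ⟨hi, i, rfl⟩))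
    have hself : toExponent (fun i => ⟨d i, hbound i⟩) = d := by ext; rfl
    rw [Finset.sum_eq_single fun i => ⟨d i, hbound i⟩, hself, if_pos hd, if_pos rfl]
    · rintro f - hf
      have : toExponent f ≠ d := by
        rintro rfl
        exact hf rfl
      rw [if_neg this, ite_self]
    · exact fun h => (h (Finset.mem_univ _)).elim
  · refine Finset.sum_eq_zero fun f _ => ?_
    grind

theorem psum_mul_mSym {r : ℕ} (hr : r ≠ 0) {lam : Multiset ℕ} (hlam : 0 ∉ lam) :
    psum (Fin n) ℤ r * mSym n lam =
      ∑ k ∈ (0 ::ₘ lam).toFinset,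
        ((lam.erase k).count (k + r) + 1) • mSym n ((k + r) ::ₘ lam.erase k) := by
  ext d
  have hcount (k : ℕ) :
      coeff d (((lam.erase k).count (k + r) + 1) • mSym n ((k + r) ::ₘ lam.erase k)) =
        ∑ i, if d i = k + r ∧ exponentType d = (k + r) ::ₘ lam.erase k then 1 else 0 := by
    rw [coeff_smul, coeff_mSym]
    by_cases hd : exponentType d = (k + r) ::ₘ lam.erase k
    · rw [← Multiset.count_cons_self, ← hd, count_exponentType d (by lia)]
      simp [hd]
    · simp [hd]
  have hterm (i : Fin n) :
      coeff d (X i ^ r * mSym n lam) = ∑ k ∈ (0 ::ₘ lam).toFinset,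
        if d i = k + r ∧ exponentType d = (k + r) ::ₘ lam.erase k then 1 else 0 := by
    rw [X_pow_eq_monomial, coeff_monomial_mul', one_mul, coeff_mSym]
    simp only [Finsupp.single_le_iff]
    split_ifs with hri htype
    · obtain ⟨k, hk⟩ := Nat.exists_eq_add_of_le' hri
      obtain ⟨hmem, hd⟩ := (exponentType_tsub_single_eq_iff hr hlam hk).1 htype
      rw [Finset.sum_eq_single_of_mem k (Multiset.mem_toFinset.2 hmem) (by grind),
        if_pos ⟨hk, hd⟩]
    · refine (Finset.sum_eq_zero fun k hk => if_neg fun h => htype ?_).symm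
      exact (exponentType_tsub_single_eq_iff hr hlam h.1).2 ⟨Multiset.mem_toFinset.1 hk, h.2⟩
    · exact (Finset.sum_eq_zero fun k _ => if_neg (by lia)).symm
  simp only [psum, Finset.sum_mul, coeff_sum, hcount, hterm]
  exact Finset.sum_comm

end Pieri

section TwosOnes

/-- The partition `(2^p, 1^q)`. -/
def twosOnes (p q : ℕ) : Multiset ℕ :=
  Multiset.replicate p 2 + Multiset.replicate q 1

theorem count_twosOnes (p q k : ℕ) :
    (twosOnes p q).count k = if k = 2 then p else if k = 1 then q else 0 := by
  simp only [twosOnes, Multiset.count_add, Multiset.count_replicate]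
  grind

theorem mem_twosOnes {p q k : ℕ} : k ∈ twosOnes p q ↔ k = 2 ∧ p ≠ 0 ∨ k = 1 ∧ q ≠ 0 := by
  simp only [twosOnes, Multiset.mem_add, Multiset.mem_replicate]
  grind

theorem twosOnes_inj {p q p' q' : ℕ} :
    twosOnes p q = twosOnes p' q' ↔ p = p' ∧ q = q' := by
  refine ⟨fun h => ⟨?_, ?_⟩, fun ⟨hp, hq⟩ => hp ▸ hq ▸ rfl⟩
  · simpa [count_twosOnes] using congrArg (Multiset.count 2) h
  · simpa [count_twosOnes] using congrArg (Multiset.count 1) h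

theorem exponentType_eq_twosOnes_iff {σ : Type*} [Fintype σ] {d : σ →₀ ℕ} {p q : ℕ} :
    exponentType d = twosOnes p q ↔
      (∀ i, d i ≤ 2) ∧ Finset.card {i | d i = 2} = p ∧ Finset.card {i | d i = 1} = q := by
  rw [← count_exponentType d two_ne_zero, ← count_exponentType d one_ne_zero]
  constructor
  · intro h
    refine ⟨fun i => ?_, by simp [h, count_twosOnes], by simp [h, count_twosOnes]⟩
    by_contra! hi
    have hmem : d i ∈ twosOnes p q := h ▸ mem_exponentType.2 ⟨by lia, i, rfl⟩
    rw [mem_twosOnes] at hmem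
    lia
  · rintro ⟨hle, rfl, rfl⟩
    ext k
    rw [count_twosOnes]
    split_ifs with h2 h1
    · rw [h2]
    · rw [h1]
    · refine Multiset.count_eq_zero.2 fun hk => ?_
      obtain ⟨hk0, i, rfl⟩ := mem_exponentType.1 hk
      have := hle i
      lia

end TwosOnes

section ProductOfTwo

variable {σ : Type*} [DecidableEq σ]

theorem sum_single_one_add_sum_single_one_eq_iff {S T : Finset σ} {d : σ →₀ ℕ} :
    ∑ i ∈ S, Finsupp.single i 1 + ∑ i ∈ T, Finsupp.single i 1 = d ↔
      ∀ i, d i = (if i ∈ S then 1 else 0) + (if i ∈ T then 1 else 0) := by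
  simp [Finsupp.ext_iff, Finsupp.single_apply, eq_comm]

variable [Fintype σ]

/-- The factorizations of `x ^ d` into a square-free monomial of degree `b` and one of degree `c`,
each square-free monomial being recorded by its set of variables. -/
noncomputable def squarefreeFactorizations (b c : ℕ) (d : σ →₀ ℕ) : Finset (Finset σ × Finset σ) :=
  {P ∈ Finset.powersetCard b Finset.univ ×ˢ Finset.powersetCard c Finset.univ |
    ∑ i ∈ P.1, Finsupp.single i 1 + ∑ i ∈ P.2, Finsupp.single i 1 = d}

theorem mem_squarefreeFactorizations {b c : ℕ} {d : σ →₀ ℕ} {P : Finset σ × Finset σ} :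
    P ∈ squarefreeFactorizations b c d ↔
      P.1.card = b ∧ P.2.card = c ∧
        ∀ i, d i = (if i ∈ P.1 then 1 else 0) + (if i ∈ P.2 then 1 else 0) := by
  simp only [squarefreeFactorizations, Finset.mem_filter, Finset.mem_product,
    Finset.mem_powersetCard_univ, sum_single_one_add_sum_single_one_eq_iff, and_assoc]

theorem coeff_esymm_mul_esymm {R : Type*} [CommSemiring R] (b c : ℕ) (d : σ →₀ ℕ) :
    coeff d (esymm σ R b * esymm σ R c) = (squarefreeFactorizations b c d).card := by
  rw [esymm_eq_sum_monomial, esymm_eq_sum_monomial, Finset.sum_mul_sum, ← Finset.sum_product']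
  simp only [monomial_mul, one_mul, coeff_sum, coeff_monomial, Finset.sum_boole,
    squarefreeFactorizations]

theorem exponentType_of_mem_squarefreeFactorizations {b c : ℕ} {d : σ →₀ ℕ}
    {P : Finset σ × Finset σ} (hP : P ∈ squarefreeFactorizations b c d) :
    exponentType d =
      twosOnes (P.1 ∩ P.2).card (b + c - 2 * (P.1 ∩ P.2).card) := by
  obtain ⟨rfl, rfl, hd⟩ := mem_squarefreeFactorizations.1 hP
  refine exponentType_eq_twosOnes_iff.2 ⟨by grind, ?_, ?_⟩
  · congr 1
    ext i
    grind
  · have hones : ({i | d i = 1} : Finset σ) = (P.1 ∪ P.2) \ (P.1 ∩ P.2) := by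
      ext i
      grind
    have := Finset.card_union_add_card_inter P.1 P.2
    rw [hones, Finset.card_sdiff_of_subset Finset.inter_subset_union]
    lia

/-- Variables of exponent 2 divide both factors; those of exponent 1 are split between them. -/
theorem card_squarefreeFactorizations {p s t : ℕ} {d : σ →₀ ℕ}
    (hd : exponentType d = twosOnes p (s + t)) :
    (squarefreeFactorizations (p + s) (p + t) d).card = (s + t).choose s := by
  obtain ⟨hle, htwos, hones⟩ := exponentType_eq_twosOnes_iff.1 hd
  set D : Finset σ := {i | d i = 2}
  set U : Finset σ := {i | d i = 1}
  have hdisj : Disjoint D U := by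
    rw [Finset.disjoint_left]
    grind
  rw [← hones, ← Finset.card_powersetCard]
  refine Finset.card_nbij' (fun P => P.1 ∩ U) (fun V => (D ∪ V, D ∪ U \ V)) ?_ ?_ ?_ ?_
  · intro P hP
    obtain ⟨hb, -, hP⟩ := mem_squarefreeFactorizations.1 hP
    have hfst : P.1 = D ∪ P.1 ∩ U := by
      ext i
      grind
    have hcard : (D ∪ P.1 ∩ U).card = D.card + (P.1 ∩ U).card :=
      Finset.card_union_of_disjoint (hdisj.mono_right Finset.inter_subset_right)
    refine Finset.mem_coe.2 (Finset.mem_powersetCard.2 ⟨Finset.inter_subset_right, ?_⟩)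
    rw [← hfst] at hcard
    lia
  · intro V hV
    obtain ⟨hVU, hV⟩ := Finset.mem_powersetCard.1 hV
    refine mem_squarefreeFactorizations.2 ⟨?_, ?_, fun i => ?_⟩
    · rw [Finset.card_union_of_disjoint (hdisj.mono_right hVU), htwos, hV]
    · rw [Finset.card_union_of_disjoint (hdisj.mono_right Finset.sdiff_subset),
        Finset.card_sdiff_of_subset hVU]
      lia
    · have := hle i
      grind
  · intro P hP
    obtain ⟨-, -, hP⟩ := mem_squarefreeFactorizations.1 hP
    ext i <;> grind
  · intro V hV
    obtain ⟨hVU, -⟩ := Finset.mem_powersetCard.1 hV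
    ext i
    grind

theorem esymm_mul_esymm (n b c : ℕ) :
    esymm (Fin n) ℤ b * esymm (Fin n) ℤ c =
      ∑ p ∈ Finset.range (min b c + 1),
        (b + c - 2 * p).choose (b - p) • mSym n (twosOnes p (b + c - 2 * p)) := by
  ext d
  simp only [coeff_esymm_mul_esymm, coeff_sum, coeff_smul, coeff_mSym]
  by_cases hd : ∃ p ≤ min b c, exponentType d = twosOnes p (b + c - 2 * p)
  · obtain ⟨p, hp, hd⟩ := hd
    obtain ⟨s, rfl⟩ := Nat.exists_eq_add_of_le (hp.trans (min_le_left b c))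
    obtain ⟨t, rfl⟩ := Nat.exists_eq_add_of_le (hp.trans (min_le_right _ c))
    rw [Finset.sum_eq_single_of_mem p (Finset.mem_range_succ_iff.2 hp), if_pos hd]
    · rw [show p + s + (p + t) - 2 * p = s + t by lia] at hd ⊢
      rw [card_squarefreeFactorizations hd, Nat.add_sub_cancel_left, nsmul_one]
    · intro p' _ hp'
      rw [hd, if_neg fun h => hp' (twosOnes_inj.1 h).1.symm, smul_zero]
  · have hempty : squarefreeFactorizations b c d = ∅ := by
      refine Finset.eq_empty_of_forall_notMem fun P hP => hd ⟨_, ?_,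
        exponentType_of_mem_squarefreeFactorizations hP⟩
      obtain ⟨rfl, rfl, -⟩ := mem_squarefreeFactorizations.1 hP
      exact le_min (Finset.card_le_card Finset.inter_subset_left)
        (Finset.card_le_card Finset.inter_subset_right)
    rw [hempty, Finset.card_empty, Nat.cast_zero, eq_comm]
    refine Finset.sum_eq_zero fun p hp => ?_
    rw [if_neg fun h => hd ⟨p, Finset.mem_range_succ_iff.1 hp, h⟩, smul_zero]

end ProductOfTwo

section Expansion

theorem factorial_mul_choose_add {R : Type*} [CommSemiring R] (k t : ℕ) :
    (t.factorial : R) * (k + t).choose t = ∏ i ∈ Finset.range t, (k + 1 + i : R) := by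
  have h := Nat.ascFactorial_eq_factorial_mul_choose k t
  rw [Nat.ascFactorial_eq_prod_range] at h
  exact_mod_cast congrArg (Nat.cast : ℕ → R) h.symm

variable (n : ℕ)

/-- At `q = 0` there is no part `1` to raise to `2`, so the middle term is absent. -/
theorem esymm_one_mul_mSym_twosOnes (p q : ℕ) :
    esymm (Fin n) ℤ 1 * mSym n (twosOnes (p + 1) q) =
      mSym n (3 ::ₘ twosOnes p q)
        + (p + 2) * (if q = 0 then 0 else mSym n (twosOnes (p + 2) (q - 1)))
        + (q + 1) * mSym n (twosOnes (p + 1) (q + 1)) := by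
  have h0 : 0 ∉ twosOnes (p + 1) q := by simp [mem_twosOnes]
  rw [esymm_one, ← psum_one, psum_mul_mSym one_ne_zero h0]
  have hzero : 1 ::ₘ (twosOnes (p + 1) q).erase 0 = twosOnes (p + 1) (q + 1) := by
    rw [Multiset.erase_of_notMem h0, twosOnes, twosOnes, Multiset.replicate_succ 1 q,
      Multiset.add_cons]
  have htwo : (twosOnes (p + 1) q).erase 2 = twosOnes p q := by
    simp [twosOnes, Multiset.replicate_succ]
  cases q with
  | zero =>
    have hset : (0 ::ₘ twosOnes (p + 1) 0).toFinset = {0, 2} := by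
      ext k
      simp [mem_twosOnes]
    rw [hset, Finset.sum_pair (by decide)]
    simp only [zero_add, ne_eq, one_ne_zero, not_false_eq_true, Multiset.count_erase_of_ne,
      count_twosOnes, OfNat.one_ne_ofNat, ↓reduceIte, hzero, one_smul, Nat.reduceAdd, htwo,
      Nat.succ_ne_self, OfNat.ofNat_ne_one, mul_zero, add_zero, Nat.cast_zero, one_mul]
    ring
  | succ q =>
    have hset : (0 ::ₘ twosOnes (p + 1) (q + 1)).toFinset = {0, 1, 2} := by
      ext k
      simp [mem_twosOnes]
      tauto
    have hone : 2 ::ₘ (twosOnes (p + 1) (q + 1)).erase 1 = twosOnes (p + 2) q := by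
      simp [twosOnes, Multiset.replicate_succ]
    rw [hset, Finset.sum_insert (by decide), Finset.sum_pair (by decide)]
    simp only [zero_add, ne_eq, one_ne_zero, not_false_eq_true, Multiset.count_erase_of_ne,
      count_twosOnes, OfNat.one_ne_ofNat, ↓reduceIte, hzero, nsmul_eq_mul, Nat.cast_add,
      Nat.cast_one, Nat.reduceAdd, OfNat.ofNat_ne_one, hone, htwo, Nat.succ_ne_self, one_smul,
      Nat.add_one_ne_zero, Nat.add_sub_cancel]
    ring

theorem esymm_mul_esymm_add_s16 (b q : ℕ) :
    esymm (Fin n) ℤ b * esymm (Fin n) ℤ (q + b) =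
      ∑ t ∈ Finset.range (b + 1),
        ((q + 2 * t).choose t : MvPolynomial (Fin n) ℤ) *
          mSym n (twosOnes (b - t) (q + 2 * t)) := by
  rw [esymm_mul_esymm, min_eq_left (Nat.le_add_left b q), ← Finset.sum_range_reflect]
  refine Finset.sum_congr rfl fun t ht => ?_
  have htb : t ≤ b := Finset.mem_range_succ_iff.1 ht
  rw [nsmul_eq_mul, Nat.add_sub_cancel, Nat.sub_sub_self htb,
    show b + (q + b) - 2 * (b - t) = q + 2 * t by lia]

theorem mSym_twosOnes_zero (q : ℕ) : mSym n (twosOnes 0 q) = esymm (Fin n) ℤ q := by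
  simpa using (esymm_mul_esymm n 0 q).symm

theorem mSym_twosOnes_one (q : ℕ) :
    mSym n (twosOnes 1 q) =
      esymm (Fin n) ℤ 1 * esymm (Fin n) ℤ (q + 1) - (q + 2) * esymm (Fin n) ℤ (q + 2) := by
  have h := esymm_mul_esymm_add_s16 n 1 q
  simp only [Finset.sum_range_succ, Finset.sum_range_zero, Nat.reduceSub, Nat.reduceMul,
    Nat.choose_zero_right, Nat.choose_one_right, mSym_twosOnes_zero] at h
  push_cast at h
  linear_combination -h

theorem two_mul_mSym_twosOnes_two (q : ℕ) :
    2 * mSym n (twosOnes 2 q) =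
      2 * esymm (Fin n) ℤ 2 * esymm (Fin n) ℤ (q + 2)
        - 2 * (q + 2) * esymm (Fin n) ℤ 1 * esymm (Fin n) ℤ (q + 3)
        + (q + 1) * (q + 4) * esymm (Fin n) ℤ (q + 4) := by
  have h := esymm_mul_esymm_add_s16 n 2 q
  have hchoose := factorial_mul_choose_add (R := MvPolynomial (Fin n) ℤ) (q + 2) 2
  simp only [Finset.sum_range_succ, Finset.sum_range_zero, Nat.reduceSub, Nat.reduceMul,
    Nat.choose_zero_right, Nat.choose_one_right, mSym_twosOnes_zero, mSym_twosOnes_one] at h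
  simp only [Nat.factorial, Finset.prod_range_succ, Finset.prod_range_zero] at hchoose
  push_cast at h hchoose
  linear_combination -2 * h - esymm (Fin n) ℤ (q + 4) * hchoose

theorem six_mul_mSym_twosOnes_three (q : ℕ) :
    6 * mSym n (twosOnes 3 q) =
      6 * esymm (Fin n) ℤ 3 * esymm (Fin n) ℤ (q + 3)
        - 6 * (q + 2) * esymm (Fin n) ℤ 2 * esymm (Fin n) ℤ (q + 4)
        + 3 * (q + 1) * (q + 4) * esymm (Fin n) ℤ 1 * esymm (Fin n) ℤ (q + 5)
        - (q + 1) * (q + 2) * (q + 6) * esymm (Fin n) ℤ (q + 6) := by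
  have h := esymm_mul_esymm_add_s16 n 3 q
  have htwo := two_mul_mSym_twosOnes_two n (q + 2)
  have hone := mSym_twosOnes_one n (q + 4)
  have hchoose₂ := factorial_mul_choose_add (R := MvPolynomial (Fin n) ℤ) (q + 2) 2
  have hchoose₃ := factorial_mul_choose_add (R := MvPolynomial (Fin n) ℤ) (q + 3) 3
  simp only [Finset.sum_range_succ, Finset.sum_range_zero, Nat.reduceSub, Nat.reduceMul,
    Nat.choose_zero_right, Nat.choose_one_right, mSym_twosOnes_zero] at h
  simp only [Nat.factorial, Finset.prod_range_succ, Finset.prod_range_zero] at hchoose₂ hchoose₃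
  push_cast at h htwo hone hchoose₂ hchoose₃
  linear_combination -6 * h - 3 * (q + 2) * htwo - 3 * (q + 3) * (q + 4) * hone
    - 3 * mSym n (twosOnes 1 (q + 4)) * hchoose₂ - esymm (Fin n) ℤ (q + 6) * hchoose₃

theorem twentyFour_mul_mSym_twosOnes_four (q : ℕ) :
    24 * mSym n (twosOnes 4 q) =
      24 * esymm (Fin n) ℤ 4 * esymm (Fin n) ℤ (q + 4)
        - 24 * (q + 2) * esymm (Fin n) ℤ 3 * esymm (Fin n) ℤ (q + 5)
        + 12 * (q + 1) * (q + 4) * esymm (Fin n) ℤ 2 * esymm (Fin n) ℤ (q + 6)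
        - 4 * (q + 1) * (q + 2) * (q + 6) * esymm (Fin n) ℤ 1 * esymm (Fin n) ℤ (q + 7)
        + (q + 1) * (q + 2) * (q + 3) * (q + 8) * esymm (Fin n) ℤ (q + 8) := by
  have h := esymm_mul_esymm_add_s16 n 4 q
  have hthree := six_mul_mSym_twosOnes_three n (q + 2)
  have htwo := two_mul_mSym_twosOnes_two n (q + 4)
  have hone := mSym_twosOnes_one n (q + 6)
  have hchoose₂ := factorial_mul_choose_add (R := MvPolynomial (Fin n) ℤ) (q + 2) 2
  have hchoose₃ := factorial_mul_choose_add (R := MvPolynomial (Fin n) ℤ) (q + 3) 3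
  have hchoose₄ := factorial_mul_choose_add (R := MvPolynomial (Fin n) ℤ) (q + 4) 4
  simp only [Finset.sum_range_succ, Finset.sum_range_zero, Nat.reduceSub, Nat.reduceMul,
    Nat.choose_zero_right, Nat.choose_one_right, mSym_twosOnes_zero] at h
  simp only [Nat.factorial, Finset.prod_range_succ, Finset.prod_range_zero]
    at hchoose₂ hchoose₃ hchoose₄
  push_cast at h hthree htwo hone hchoose₂ hchoose₃ hchoose₄
  linear_combination -24 * h - 4 * (q + 2) * hthree - 6 * (q + 3) * (q + 4) * htwo
    - 4 * (q + 4) * (q + 5) * (q + 6) * hone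
    - 12 * mSym n (twosOnes 2 (q + 4)) * hchoose₂ - 4 * mSym n (twosOnes 1 (q + 6)) * hchoose₃
    - esymm (Fin n) ℤ (q + 8) * hchoose₄

theorem two_mul_mSym_three_cons_twosOnes_two (q : ℕ) :
    2 * mSym n (3 ::ₘ twosOnes 2 q) =
      2 * esymm (Fin n) ℤ 1 * esymm (Fin n) ℤ 3 * esymm (Fin n) ℤ (q + 3)
        - 8 * esymm (Fin n) ℤ 4 * esymm (Fin n) ℤ (q + 3)
        + 6 * (q + 1) * esymm (Fin n) ℤ 3 * esymm (Fin n) ℤ (q + 4)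
        - 2 * (q + 2) * esymm (Fin n) ℤ 1 * esymm (Fin n) ℤ 2 * esymm (Fin n) ℤ (q + 4)
        - 2 * (q + 3) * (q - 1) * esymm (Fin n) ℤ 2 * esymm (Fin n) ℤ (q + 5)
        + (q + 1) * (q + 4) * esymm (Fin n) ℤ 1 ^ 2 * esymm (Fin n) ℤ (q + 5)
        - (q + 1) * (3 * q + 14) * esymm (Fin n) ℤ 1 * esymm (Fin n) ℤ (q + 6)
        + (q + 1) * (q + 2) * (q + 7) * esymm (Fin n) ℤ (q + 7) := by
  have hpieri := esymm_one_mul_mSym_twosOnes n 2 q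
  have hthree := six_mul_mSym_twosOnes_three n q
  have hthree' := six_mul_mSym_twosOnes_three n (q + 1)
  have hfour : 24 * (if q = 0 then 0 else mSym n (twosOnes 4 (q - 1))) =
      24 * esymm (Fin n) ℤ 4 * esymm (Fin n) ℤ (q + 3)
        - 24 * (q + 1) * esymm (Fin n) ℤ 3 * esymm (Fin n) ℤ (q + 4)
        + 12 * q * (q + 3) * esymm (Fin n) ℤ 2 * esymm (Fin n) ℤ (q + 5)
        - 4 * q * (q + 1) * (q + 5) * esymm (Fin n) ℤ 1 * esymm (Fin n) ℤ (q + 6)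
        + q * (q + 1) * (q + 2) * (q + 7) * esymm (Fin n) ℤ (q + 7) := by
    cases q with
    | zero =>
      push_cast
      simp only [zero_add]
      ring
    | succ q =>
      rw [if_neg q.succ_ne_zero, Nat.add_sub_cancel]
      have := twentyFour_mul_mSym_twosOnes_four n q
      push_cast
      linear_combination this
  simp only [Nat.reduceAdd] at hpieri
  push_cast at hpieri hthree' hfour
  apply mul_left_cancel₀ (show (12 : MvPolynomial (Fin n) ℤ) ≠ 0 by norm_num)
  linear_combination -24 * hpieri + 4 * esymm (Fin n) ℤ 1 * hthree - 4 * hfour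
    - 4 * (q + 1) * hthree'

end Expansion

theorem two_mul_C_ediv_two {σ : Type*} {a : ℤ} (ha : Even a) :
    2 * C (a / 2) = (C a : MvPolynomial σ ℤ) := by
  rw [← map_ofNat (C : ℤ →+* MvPolynomial σ ℤ) 2, ← C_mul, Int.two_mul_ediv_two_of_even ha]

theorem stmt_16 (n : ℕ) (hn : 1 ≤ n) (i : ℕ) (hi : 3 ≤ i) :
    mSym n (3 ::ₘ 2 ::ₘ 2 ::ₘ Multiset.replicate (i - 3) 1)
      = esymm (Fin n) ℤ 1 * esymm (Fin n) ℤ 3 * esymm (Fin n) ℤ (i) - C ((4 : ℤ)) * esymm (Fin n) ℤ 4 * esymm (Fin n) ℤ (i)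
        + C ((3 * (i : ℤ) - 6 : ℤ)) * esymm (Fin n) ℤ 3 * esymm (Fin n) ℤ (i + 1)
        - C (((i : ℤ) - 1 : ℤ)) * esymm (Fin n) ℤ 1 * esymm (Fin n) ℤ 2 * esymm (Fin n) ℤ (i + 1)
        - C (((i : ℤ)^2 - 4 * (i : ℤ) : ℤ)) * esymm (Fin n) ℤ 2 * esymm (Fin n) ℤ (i + 2)
        + C ((((i : ℤ)^2 - (i : ℤ) - 2) / 2 : ℤ)) * esymm (Fin n) ℤ 1^2 * esymm (Fin n) ℤ (i + 2)
        - C (((3 * (i : ℤ)^2 - (i : ℤ) - 10) / 2 : ℤ)) * esymm (Fin n) ℤ 1 * esymm (Fin n) ℤ (i + 3)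
        + C ((((i : ℤ)^3 + (i : ℤ)^2 - 10 * (i : ℤ) + 8) / 2 : ℤ)) * esymm (Fin n) ℤ (i + 4) := by
  obtain ⟨q, rfl⟩ := Nat.exists_eq_add_of_le' hi
  have hlam : 3 ::ₘ 2 ::ₘ 2 ::ₘ Multiset.replicate (q + 3 - 3) 1 = 3 ::ₘ twosOnes 2 q := by
    simp [twosOnes, Multiset.replicate_succ]
  have heven₁ (x : ℤ) : Even (x ^ 2 - x - 2) := by
    simp [parity_simps]
  have heven₂ (x : ℤ) : Even (3 * x ^ 2 - x - 10) := by
    simp [parity_simps, show Even (10 : ℤ) by decide, show ¬ Even (3 : ℤ) by decide]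
  have heven₃ (x : ℤ) : Even (x ^ 3 + x ^ 2 - 10 * x + 8) := by
    simp [parity_simps, show Even (10 : ℤ) by decide, show Even (8 : ℤ) by decide]
  have hhalf₁ := two_mul_C_ediv_two (σ := Fin n) (heven₁ (q + 3 : ℕ))
  have hhalf₂ := two_mul_C_ediv_two (σ := Fin n) (heven₂ (q + 3 : ℕ))
  have hhalf₃ := two_mul_C_ediv_two (σ := Fin n) (heven₃ (q + 3 : ℕ))
  rw [hlam]
  apply mul_left_cancel₀ (show (2 : MvPolynomial (Fin n) ℤ) ≠ 0 by norm_num)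
  simp only [C_add, C_sub, C_mul, C_pow, map_natCast, map_ofNat, map_one] at hhalf₁ hhalf₂ hhalf₃ ⊢
  push_cast at hhalf₁ hhalf₂ hhalf₃ ⊢
  linear_combination two_mul_mSym_three_cons_twosOnes_two n q
    - esymm (Fin n) ℤ 1 ^ 2 * esymm (Fin n) ℤ (q + 5) * hhalf₁
    + esymm (Fin n) ℤ 1 * esymm (Fin n) ℤ (q + 6) * hhalf₂ - esymm (Fin n) ℤ (q + 7) * hhalf₃
end

section
/- For every n ≥ 1 and every integer i ≥ 2, in ℤ[x₁,…,xₙ] one has m_{(3,3,1^{i−2})} = σ₂²·σᵢ − 2·σ₁·σ₃·σᵢ + 2·σ₄·σᵢ − σ₁·σ₂·σ_{i+1} + 3·σ₃·σ_{i+1} − (2i+1)·σ₂·σ_{i+2} + (i+1)·σ₁²·σ_{i+2} − (i+1)·σ₁·σ_{i+3} + ((i² + 3i − 4)/2)·σ_{i+4}. (The coefficient (i² + 3i − 4)/2 = (i+4)(i−1)/2 is an integer.) -/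
open MvPolynomial

/-!
Fix elements `x i` of a commutative ring and a finite index set `s`, and write `e k` for the
elementary symmetric sums over `s`. For exponents `p₁, …, pᵣ` let `A(p₁, …, pᵣ; k)` be the sum of
`x i₁ ^ p₁ ⋯ x iᵣ ^ pᵣ · e k (s \ {i₁, …, iᵣ})` over distinct indices. Splitting
`e (k + 1) (s) = e (k + 1) (s \ {i}) + x i · e k (s \ {i})` at each chosen index yields
product rules such as

* `A(p; 0) e (k + 1) = A(p; k + 1) + A(p + 1; k)`,
* `A(p, q; 0) e (k + 2)
    = A(p, q; k + 2) + A(p + 1, q; k + 1) + A(p, q + 1; k + 1) + A(p + 1, q + 1; k)`,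

while an exponent `1` can be absorbed: `A(…, 1; k) = (k + 1) A(…; k + 1)`. The second rule
at `(2, 2)`, `(2, 1)` and `(1, 1)` expresses `A(3, 3; k)` through sums with at most one exponent
larger than `1`, and the first rule finishes the elimination. Finally, `A(3, 3; k)` counts every
monomial of type `(3, 3, 1ᵏ)` twice, once for each order of the two cubed variables.
-/

open Finset

section EsymmOn

variable {ι R : Type*} [CommSemiring R] (x : ι → R)

/-- The elementary symmetric polynomial of degree `k` evaluated at the family `x i`, `i ∈ s`. -/
abbrev esymmOn (s : Finset ι) (k : ℕ) : R := (s.1.map x).esymm k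

lemma esymmOn_zero (s : Finset ι) : esymmOn x s 0 = 1 := by
  simp [esymmOn, esymm_map_val]

lemma esymmOn_succ_of_mem [DecidableEq ι] {s : Finset ι} {i : ι} (hi : i ∈ s) (k : ℕ) :
    esymmOn x s (k + 1) = esymmOn x (s.erase i) (k + 1) + x i * esymmOn x (s.erase i) k := by
  rw [esymmOn, ← Multiset.cons_erase hi, ← erase_val]
  simp only [Multiset.esymm, Multiset.map_cons, Multiset.powersetCard_cons, Multiset.map_map,
    Multiset.map_add, Multiset.sum_add, Function.comp_def, Multiset.prod_cons,
    Multiset.sum_map_mul_left]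

end EsymmOn

section MonomialSum

variable {ι R : Type*}

/-- The multiset of nonzero values of `f` on `s`: the partition underlying the monomial
`∏ i ∈ s, x i ^ f i`. -/
def nonzeroParts (s : Finset ι) (f : ι → ℕ) : Multiset ℕ := (s.1.map f).filter (· ≠ 0)

lemma sum_nonzeroParts (s : Finset ι) (f : ι → ℕ) : (nonzeroParts s f).sum = ∑ i ∈ s, f i := by
  simp only [nonzeroParts, Multiset.filter_map, Function.comp_def]
  rw [← filter_val]
  exact sum_filter_ne_zero s

lemma count_nonzeroParts {p : ℕ} (hp : p ≠ 0) (s : Finset ι) (f : ι → ℕ) :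
    (nonzeroParts s f).count p = #{i ∈ s | f i = p} := by
  rw [nonzeroParts, Multiset.count_filter_of_pos (p := (· ≠ 0)) hp, Multiset.count_map, card_def,
    filter_val]
  simp only [eq_comm]

lemma card_nonzeroParts (s : Finset ι) (f : ι → ℕ) :
    (nonzeroParts s f).card = #{i ∈ s | f i ≠ 0} := by
  rw [nonzeroParts, Multiset.filter_map, Multiset.card_map]
  rfl

lemma mem_nonzeroParts {s : Finset ι} {f : ι → ℕ} {p : ℕ} :
    p ∈ nonzeroParts s f ↔ (∃ i ∈ s, f i = p) ∧ p ≠ 0 := by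
  simp [nonzeroParts]

lemma nonzeroParts_congr {s : Finset ι} {f g : ι → ℕ} (h : ∀ i ∈ s, f i = g i) :
    nonzeroParts s f = nonzeroParts s g := by
  rw [nonzeroParts, Multiset.map_congr rfl h, nonzeroParts]

variable [DecidableEq ι]

lemma nonzeroParts_eq_cons_erase {s : Finset ι} {f : ι → ℕ} {i : ι} (hi : i ∈ s) (hf : f i ≠ 0) :
    nonzeroParts s f = f i ::ₘ nonzeroParts (s.erase i) f := by
  rw [nonzeroParts, ← Multiset.cons_erase hi, Multiset.map_cons,
    Multiset.filter_cons_of_pos (p := (· ≠ 0)) _ hf, ← erase_val, nonzeroParts]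

/-- The exponent vectors supported in `s` whose multiset of nonzero entries is `lam`. -/
def exponentsOfType (s : Finset ι) (lam : Multiset ℕ) : Finset (ι → ℕ) :=
  {f ∈ s.piAntidiag lam.sum | nonzeroParts s f = lam}

lemma mem_exponentsOfType {s : Finset ι} {lam : Multiset ℕ} {f : ι → ℕ} :
    f ∈ exponentsOfType s lam ↔ (∀ i, f i ≠ 0 → i ∈ s) ∧ nonzeroParts s f = lam := by
  rw [exponentsOfType, mem_filter, mem_piAntidiag]
  constructor
  · rintro ⟨⟨-, hs⟩, hlam⟩
    exact ⟨hs, hlam⟩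
  · rintro ⟨hs, rfl⟩
    exact ⟨⟨(sum_nonzeroParts s f).symm, hs⟩, rfl⟩

lemma update_zero_mem_exponentsOfType_erase {s : Finset ι} {f : ι → ℕ} {i : ι} {p : ℕ}
    {mu : Multiset ℕ} (hi : i ∈ s) (hp : p ≠ 0) (hf : f ∈ exponentsOfType s (p ::ₘ mu))
    (hfi : f i = p) : Function.update f i 0 ∈ exponentsOfType (s.erase i) mu := by
  obtain ⟨hs, hlam⟩ := mem_exponentsOfType.1 hf
  subst hfi
  rw [nonzeroParts_eq_cons_erase hi hp, Multiset.cons_inj_right] at hlam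
  refine mem_exponentsOfType.2 ⟨fun j hj => ?_, ?_⟩
  · grind
  · rw [← hlam]
    exact nonzeroParts_congr (by grind)

lemma update_mem_exponentsOfType_cons {s : Finset ι} {g : ι → ℕ} {i : ι} {p : ℕ}
    {mu : Multiset ℕ} (hi : i ∈ s) (hp : p ≠ 0) (hg : g ∈ exponentsOfType (s.erase i) mu) :
    Function.update g i p ∈ exponentsOfType s (p ::ₘ mu) := by
  obtain ⟨hs, hmu⟩ := mem_exponentsOfType.1 hg
  refine mem_exponentsOfType.2 ⟨fun j hj => ?_, ?_⟩
  · grind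
  · rw [nonzeroParts_eq_cons_erase hi (by simpa using hp), Function.update_self, ← hmu]
    exact congrArg _ (nonzeroParts_congr (by grind))

variable [CommSemiring R] (x : ι → R)

/-- The monomial symmetric polynomial `m_lam` evaluated at the family `x i`, `i ∈ s`. -/
def monomialSum (s : Finset ι) (lam : Multiset ℕ) : R :=
  ∑ f ∈ exponentsOfType s lam, ∏ i ∈ s, x i ^ f i

lemma sum_exponentsOfType_cons_apply_eq {s : Finset ι} {i : ι} (hi : i ∈ s) {p : ℕ} (hp : p ≠ 0)
    (mu : Multiset ℕ) :
    ∑ f ∈ exponentsOfType s (p ::ₘ mu) with f i = p, ∏ j ∈ s, x j ^ f j =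
      x i ^ p * monomialSum x (s.erase i) mu := by
  rw [monomialSum, mul_sum]
  refine sum_bij' (fun f _ => Function.update f i 0) (fun g _ => Function.update g i p)
    (fun f hf => ?_) (fun g hg => ?_) (fun f hf => ?_) (fun g hg => ?_) (fun f hf => ?_)
  · rw [mem_filter] at hf
    exact update_zero_mem_exponentsOfType_erase hi hp hf.1 hf.2
  · exact mem_filter.2 ⟨update_mem_exponentsOfType_cons hi hp hg, Function.update_self ..⟩
  · simp [← (mem_filter.1 hf).2]
  · have hgi : g i = 0 := by
      by_contra h
      exact notMem_erase i s ((mem_exponentsOfType.1 hg).1 i h)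
    simp [← hgi]
  · rw [← mul_prod_erase s _ hi, (mem_filter.1 hf).2]
    congr 1
    exact prod_congr rfl fun j hj => by rw [Function.update_of_ne (ne_of_mem_erase hj)]

/-- Both sides sum the monomials of `m_(p, mu)` over all choices of a variable of exponent `p`. -/
lemma count_mul_monomialSum_cons (s : Finset ι) {p : ℕ} (hp : p ≠ 0) (mu : Multiset ℕ) :
    ((p ::ₘ mu).count p : R) * monomialSum x s (p ::ₘ mu) =
      ∑ i ∈ s, x i ^ p * monomialSum x (s.erase i) mu := by
  calc ((p ::ₘ mu).count p : R) * monomialSum x s (p ::ₘ mu)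
      = ∑ f ∈ exponentsOfType s (p ::ₘ mu), ∑ i ∈ s with f i = p, ∏ j ∈ s, x j ^ f j := by
        rw [monomialSum, mul_sum]
        refine sum_congr rfl fun f hf => ?_
        rw [← (mem_exponentsOfType.1 hf).2, count_nonzeroParts hp, sum_const, nsmul_eq_mul]
    _ = ∑ i ∈ s, ∑ f ∈ exponentsOfType s (p ::ₘ mu) with f i = p, ∏ j ∈ s, x j ^ f j :=
        sum_comm' (by simp only [mem_filter]; tauto)
    _ = ∑ i ∈ s, x i ^ p * monomialSum x (s.erase i) mu :=
        sum_congr rfl fun i hi => sum_exponentsOfType_cons_apply_eq x hi hp mu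

lemma mem_exponentsOfType_replicate_one {s : Finset ι} {k : ℕ} {f : ι → ℕ} :
    f ∈ exponentsOfType s (Multiset.replicate k 1) ↔
      ∃ t ∈ s.powersetCard k, f = fun i => if i ∈ t then 1 else 0 := by
  rw [mem_exponentsOfType, Multiset.eq_replicate, card_nonzeroParts]
  constructor
  · rintro ⟨hs, hk, h_one⟩
    refine ⟨{i ∈ s | f i ≠ 0}, mem_powersetCard.2 ⟨filter_subset _ _, hk⟩, funext fun i => ?_⟩
    by_cases hi : f i = 0
    · simp [hi]
    · simp [hs i hi, h_one _ (mem_nonzeroParts.2 ⟨⟨i, hs i hi, rfl⟩, hi⟩)]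
  · rintro ⟨t, ht, rfl⟩
    obtain ⟨hts, rfl⟩ := mem_powersetCard.1 ht
    refine ⟨by grind, ?_, by grind [mem_nonzeroParts]⟩
    simp [filter_mem_eq_inter, inter_eq_right.2 hts]

lemma monomialSum_replicate_one (s : Finset ι) (k : ℕ) :
    monomialSum x s (Multiset.replicate k 1) = esymmOn x s k := by
  rw [monomialSum, esymmOn, esymm_map_val]
  symm
  refine sum_bij (fun t _ i => if i ∈ t then 1 else 0)
    (fun t ht => mem_exponentsOfType_replicate_one.2 ⟨t, ht, rfl⟩) (fun t _ u _ h => ?_)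
    (fun f hf => ?_) (fun t ht => ?_)
  · ext i
    have := congrFun h i
    grind
  · obtain ⟨t, ht, rfl⟩ := mem_exponentsOfType_replicate_one.1 hf
    exact ⟨t, ht, rfl⟩
  · simp [pow_ite, prod_ite_mem, inter_eq_right.2 (mem_powersetCard.1 ht).1]

lemma sum_mul_esymmOn_erase (s : Finset ι) (k : ℕ) :
    ∑ i ∈ s, x i * esymmOn x (s.erase i) k = (k + 1) * esymmOn x s (k + 1) := by
  have h := count_mul_monomialSum_cons x s one_ne_zero (Multiset.replicate k 1)
  rw [← Multiset.replicate_succ, Multiset.count_replicate_self] at h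
  simpa only [monomialSum_replicate_one, pow_one, Nat.cast_succ] using h.symm

end MonomialSum

section AugmentedSum

variable {ι R : Type*} [DecidableEq ι] [CommSemiring R] (x : ι → R)

/-- The sum of `x i₁ ^ p₁ ⋯ x iᵣ ^ pᵣ * e k` over distinct indices `i₁, …, iᵣ ∈ s`, where
`p = [p₁, …, pᵣ]` and `e k` is the elementary symmetric polynomial in the remaining variables.
For positive `pⱼ` it is a multiple of `m_(p₁, …, pᵣ, 1ᵏ)`, normalized to obey uniform product
rules. -/
def augmentedSum : List ℕ → Finset ι → ℕ → R
  | [], s, k => esymmOn x s k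
  | p :: ps, s, k => ∑ i ∈ s, x i ^ p * augmentedSum ps (s.erase i) k

lemma augmentedSum_cons (p : ℕ) (ps : List ℕ) (s : Finset ι) (k : ℕ) :
    augmentedSum x (p :: ps) s k = ∑ i ∈ s, x i ^ p * augmentedSum x ps (s.erase i) k := rfl

lemma augmentedSum_append_one (ps : List ℕ) (s : Finset ι) (k : ℕ) :
    augmentedSum x (ps ++ [1]) s k = (k + 1) * augmentedSum x ps s (k + 1) := by
  induction ps generalizing s with
  | nil => simpa [augmentedSum] using sum_mul_esymmOn_erase x s k
  | cons p ps ih =>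
    simp only [List.cons_append, augmentedSum_cons, ih, mul_sum]
    exact sum_congr rfl fun i _ => by ring

lemma augmentedSum_pair_comm (p q : ℕ) (s : Finset ι) (k : ℕ) :
    augmentedSum x [p, q] s k = augmentedSum x [q, p] s k := by
  simp only [augmentedSum, mul_sum]
  rw [sum_comm' (t' := s) (s' := fun j => s.erase j) (by grind)]
  refine sum_congr rfl fun j _ => sum_congr rfl fun i _ => ?_
  rw [erase_right_comm]
  ring

lemma augmentedSum_singleton_zero_mul (p : ℕ) (s : Finset ι) (k : ℕ) :
    augmentedSum x [p] s 0 * esymmOn x s (k + 1) =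
      augmentedSum x [p] s (k + 1) + augmentedSum x [p + 1] s k := by
  simp only [augmentedSum, sum_mul, ← sum_add_distrib]
  refine sum_congr rfl fun i hi => ?_
  rw [esymmOn_succ_of_mem x hi, esymmOn_zero]
  ring

lemma augmentedSum_pair_zero_mul (p q : ℕ) (s : Finset ι) (k : ℕ) :
    augmentedSum x [p, q] s 0 * esymmOn x s (k + 2) =
      augmentedSum x [p, q] s (k + 2) + augmentedSum x [p + 1, q] s (k + 1) +
        augmentedSum x [p, q + 1] s (k + 1) + augmentedSum x [p + 1, q + 1] s k := by
  simp only [augmentedSum_cons x _ [_], sum_mul, ← sum_add_distrib]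
  refine sum_congr rfl fun i hi => ?_
  calc x i ^ p * augmentedSum x [q] (s.erase i) 0 * esymmOn x s (k + 2)
      = x i ^ p * (augmentedSum x [q] (s.erase i) 0 * esymmOn x (s.erase i) (k + 2)) +
          x i ^ (p + 1) * (augmentedSum x [q] (s.erase i) 0 * esymmOn x (s.erase i) (k + 1)) := by
        rw [esymmOn_succ_of_mem x hi]
        ring
    _ = _ := by
        simp only [augmentedSum_singleton_zero_mul]
        ring

lemma augmentedSum_pair_self {p : ℕ} (hp : 1 < p) (s : Finset ι) (k : ℕ) :
    augmentedSum x [p, p] s k =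
      2 * monomialSum x s (p ::ₘ p ::ₘ Multiset.replicate k 1) := by
  have hp₀ : p ≠ 0 := by lia
  have h_count : (Multiset.replicate k 1).count p = 0 := by
    rw [Multiset.count_replicate, if_neg hp.ne]
  have h_inner (t : Finset ι) :
      augmentedSum x [p] t k = monomialSum x t (p ::ₘ Multiset.replicate k 1) := by
    simpa [h_count, monomialSum_replicate_one, augmentedSum] using
      (count_mul_monomialSum_cons x t hp₀ (Multiset.replicate k 1)).symm
  simpa [h_count, h_inner, augmentedSum_cons x p [p]] using
    (count_mul_monomialSum_cons x s hp₀ (p ::ₘ Multiset.replicate k 1)).symm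

lemma augmentedSum_one (s : Finset ι) (k : ℕ) :
    augmentedSum x [1] s k = (k + 1) * esymmOn x s (k + 1) :=
  augmentedSum_append_one x [] s k

lemma augmentedSum_pair_one (p : ℕ) (s : Finset ι) (k : ℕ) :
    augmentedSum x [p, 1] s k = (k + 1) * augmentedSum x [p] s (k + 1) :=
  augmentedSum_append_one x [p] s k

end AugmentedSum

section ClosedForms

variable {ι R : Type*} [DecidableEq ι] [CommRing R] (x : ι → R) (s : Finset ι) (k : ℕ)

lemma augmentedSum_two :
    augmentedSum x [2] s k =
      esymmOn x s 1 * esymmOn x s (k + 1) - (k + 2) * esymmOn x s (k + 2) := by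
  have h := augmentedSum_singleton_zero_mul x 1 s k
  simp only [augmentedSum_one] at h
  push_cast at h
  linear_combination -h

lemma augmentedSum_three :
    augmentedSum x [3] s k =
      (esymmOn x s 1 ^ 2 - 2 * esymmOn x s 2) * esymmOn x s (k + 1) -
        esymmOn x s 1 * esymmOn x s (k + 2) + (k + 3) * esymmOn x s (k + 3) := by
  have h := augmentedSum_singleton_zero_mul x 2 s k
  simp only [augmentedSum_two] at h
  push_cast at h
  linear_combination -h

lemma augmentedSum_two_two :
    augmentedSum x [2, 2] s k =
      2 * esymmOn x s 2 * esymmOn x s (k + 2) -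
        2 * (k + 2) * esymmOn x s 1 * esymmOn x s (k + 3) +
        (k + 1) * (k + 4) * esymmOn x s (k + 4) := by
  have h := augmentedSum_pair_zero_mul x 1 1 s k
  simp only [augmentedSum_pair_comm x 1 2, augmentedSum_pair_one, augmentedSum_one,
    augmentedSum_two, Nat.reduceAdd] at h
  push_cast at h
  linear_combination -h

lemma augmentedSum_three_two :
    augmentedSum x [3, 2] s k =
      (esymmOn x s 1 * esymmOn x s 2 - 3 * esymmOn x s 3) * esymmOn x s (k + 2) -
        ((k + 2) * esymmOn x s 1 ^ 2 - 2 * (k + 1) * esymmOn x s 2) * esymmOn x s (k + 3) +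
        (2 * k + 5) * esymmOn x s 1 * esymmOn x s (k + 4) -
        (k + 1) * (k + 5) * esymmOn x s (k + 5) := by
  have h := augmentedSum_pair_zero_mul x 2 1 s k
  simp only [augmentedSum_pair_one, augmentedSum_two, augmentedSum_three,
    augmentedSum_two_two, Nat.reduceAdd] at h
  push_cast at h
  linear_combination -h

lemma augmentedSum_three_three :
    augmentedSum x [3, 3] s k =
      2 * (esymmOn x s 2 ^ 2 - 2 * esymmOn x s 1 * esymmOn x s 3 + 2 * esymmOn x s 4) *
          esymmOn x s (k + 2) -
        2 * (esymmOn x s 1 * esymmOn x s 2 - 3 * esymmOn x s 3) * esymmOn x s (k + 3) +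
        2 * ((k + 3) * esymmOn x s 1 ^ 2 - (2 * k + 5) * esymmOn x s 2) * esymmOn x s (k + 4) -
        2 * (k + 3) * esymmOn x s 1 * esymmOn x s (k + 5) +
        (k + 1) * (k + 6) * esymmOn x s (k + 6) := by
  have h := augmentedSum_pair_zero_mul x 2 2 s k
  simp only [augmentedSum_pair_comm x 2 3, augmentedSum_two_two, augmentedSum_three_two,
    Nat.reduceAdd] at h
  push_cast at h
  linear_combination -h

end ClosedForms

lemma mSym_eq_monomialSum (n : ℕ) (lam : Multiset ℕ) :
    mSym n lam = monomialSum (X : Fin n → MvPolynomial (Fin n) ℤ) univ lam := by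
  have h_parts (f : Fin n → ℕ) :
      Multiset.map f (univ.filter fun i => f i ≠ 0).val = nonzeroParts univ f := by
    simp only [nonzeroParts, Multiset.filter_map, filter_val, Function.comp_def]
  have h_lt {f : Fin n → ℕ} (hf : f ∈ exponentsOfType univ lam) (i : Fin n) :
      f i < lam.sum + 1 := by
    rw [← (mem_exponentsOfType.1 hf).2, sum_nonzeroParts, Nat.lt_succ_iff]
    exact single_le_sum (fun _ _ => Nat.zero_le _) (mem_univ i)
  rw [mSym, ← sum_filter, monomialSum]
  refine sum_bij' (fun f _ i => (f i : ℕ)) (fun f hf i => ⟨f i, h_lt hf i⟩)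
    (fun f hf => ?_) (fun f hf => ?_) (fun _ _ => rfl) (fun _ _ => rfl) (fun _ _ => rfl)
  · rw [mem_filter, h_parts fun i => (f i : ℕ)] at hf
    exact mem_exponentsOfType.2 ⟨fun i _ => mem_univ i, hf.2⟩
  · rw [mem_filter, h_parts f]
    exact ⟨mem_univ _, (mem_exponentsOfType.1 hf).2⟩

lemma two_mul_sq_add_three_mul_sub_four_ediv_two (i : ℤ) :
    2 * ((i ^ 2 + 3 * i - 4) / 2) = i ^ 2 + 3 * i - 4 := by
  refine Int.mul_ediv_cancel' (even_iff_two_dvd.1 ?_)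
  have h : i ^ 2 + 3 * i - 4 = i * (i + 1) + 2 * (i - 2) := by ring
  rw [h]
  exact (Int.even_mul_succ_self i).add (even_two_mul _)

theorem stmt_17 (n : ℕ) (hn : 1 ≤ n) (i : ℕ) (hi : 2 ≤ i) :
    mSym n (3 ::ₘ 3 ::ₘ Multiset.replicate (i - 2) 1)
      = esymm (Fin n) ℤ 2^2 * esymm (Fin n) ℤ (i) - C ((2 : ℤ)) * esymm (Fin n) ℤ 1 * esymm (Fin n) ℤ 3 * esymm (Fin n) ℤ (i) + C ((2 : ℤ)) * esymm (Fin n) ℤ 4 * esymm (Fin n) ℤ (i)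
        - esymm (Fin n) ℤ 1 * esymm (Fin n) ℤ 2 * esymm (Fin n) ℤ (i + 1) + C ((3 : ℤ)) * esymm (Fin n) ℤ 3 * esymm (Fin n) ℤ (i + 1)
        - C ((2 * (i : ℤ) + 1 : ℤ)) * esymm (Fin n) ℤ 2 * esymm (Fin n) ℤ (i + 2)
        + C (((i : ℤ) + 1 : ℤ)) * esymm (Fin n) ℤ 1^2 * esymm (Fin n) ℤ (i + 2)
        - C (((i : ℤ) + 1 : ℤ)) * esymm (Fin n) ℤ 1 * esymm (Fin n) ℤ (i + 3)
        + C ((((i : ℤ)^2 + 3 * (i : ℤ) - 4) / 2 : ℤ)) * esymm (Fin n) ℤ (i + 4) := by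
  obtain ⟨k, rfl⟩ := Nat.exists_eq_add_of_le' hi
  have h_double := (augmentedSum_pair_self X (p := 3) (by norm_num) univ k).symm.trans
    (augmentedSum_three_three (X : Fin n → MvPolynomial (Fin n) ℤ) univ k)
  have h_coeff := congrArg (C : ℤ →+* MvPolynomial (Fin n) ℤ)
    (two_mul_sq_add_three_mul_sub_four_ediv_two (k + 2 : ℕ))
  simp only [esymmOn, ← esymm_eq_multiset_esymm] at h_double
  rw [mSym_eq_monomialSum, Nat.add_sub_cancel]
  refine mul_left_cancel₀ (two_ne_zero : (2 : MvPolynomial (Fin n) ℤ) ≠ 0) ?_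
  simp only [map_sub, map_add, map_mul, map_pow, map_natCast, map_ofNat, map_one,
    Nat.cast_add, Nat.cast_ofNat] at h_coeff ⊢
  linear_combination h_double - esymm (Fin n) ℤ (k + 6) * h_coeff
end
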